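/- arXiv:2605.27212 — 5 statements merged into one kernel-verified Lean document; each statement's English description precedes it below -/
import Mathlib

section
/- There is a universal constant C < ∞ such that the following holds. Let K be a Markov kernel on a finite set E, reversible with respect to a probability measure ρ with ρ(x) > 0 for all x, and suppose Var_ρ(f) ≤ C_P · E_K^ρ(f,f) for all real functions f (Poincaré constant at most C_P). Then for every real function f, Ent_ρ(f²) ≤ C · C_P · log(1/ρ_*) · E_K^ρ(f,f), where ρ_* = min_{x∈E} ρ(x). -/
open Finset

noncomputable section

/-- `Ent_ρ(g) = ρ(g log g) − ρ(g) log ρ(g)` for a weight `ρ` and nonnegative `g`. -/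
def ent {E : Type*} [Fintype E] (ρ g : E → ℝ) : ℝ :=
  (∑ x, ρ x * g x * Real.log (g x)) - (∑ x, ρ x * g x) * Real.log (∑ x, ρ x * g x)

/-- Variance of `f` under the weight `ρ`. -/
def var {E : Type*} [Fintype E] (ρ f : E → ℝ) : ℝ :=
  (∑ x, ρ x * (f x) ^ 2) - (∑ x, ρ x * f x) ^ 2

/-- Dirichlet form `E_K^ρ(f,f) = (1/2) Σ_{x,y} ρ(x) K(x,y) (f(x)−f(y))²`. -/
def dirichlet {E : Type*} [Fintype E] (ρ : E → ℝ) (K : E → E → ℝ) (f : E → ℝ) : ℝ :=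
  (1 / 2) * ∑ x, ∑ y, ρ x * K x y * (f x - f y) ^ 2

/-!
Write `A = ρ(f²)`. The entropy of `f²` is `A` times the relative entropy of the density `f² / A`,
while `ρ((|f| - √A)²) = 2 (A - √A ρ(|f|))` is `A` times its squared Hellinger distance to `1`; this
is at most `2 Var_ρ(f)`, since `|ρ(f)| ≤ √A` and `|ρ(f)| ≤ ρ(|f|)`. Relative entropy exceeds squared
Hellinger distance at most by a factor of order `max 1 (log M)` when the density is bounded by `M`,
and every probability density with respect to `ρ` is bounded by `1 / ρ_*`.
-/

open InformationTheory

section KLFun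

variable {x M : ℝ}

theorem klFun_le_sub_one_sq (hx : 0 ≤ x) : klFun x ≤ (x - 1) ^ 2 := by
  rcases hx.eq_or_lt with rfl | hx
  · simp [klFun_zero]
  · calc klFun x = x * Real.log x + 1 - x := klFun_apply x
      _ ≤ x * (x - 1) + 1 - x := by gcongr; exact Real.log_le_sub_one_of_pos hx
      _ = (x - 1) ^ 2 := by ring

theorem klFun_le_nine_mul_sqrt_sub_one_sq (hx : 0 ≤ x) (hx4 : x ≤ 4) :
    klFun x ≤ 9 * (√x - 1) ^ 2 := by
  have hsqrt : √x ≤ 2 := Real.sqrt_le_iff.2 ⟨by norm_num, by linarith⟩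
  calc klFun x ≤ (x - 1) ^ 2 := klFun_le_sub_one_sq hx
    _ = (√x + 1) ^ 2 * (√x - 1) ^ 2 := by
        rw [← mul_pow, ← sq_sub_sq, Real.sq_sqrt hx, one_pow]
    _ ≤ (2 + 1) ^ 2 * (√x - 1) ^ 2 := by gcongr
    _ = 9 * (√x - 1) ^ 2 := by norm_num

theorem klFun_le_four_mul_log_mul_sqrt_sub_one_sq (hx : 4 ≤ x) :
    klFun x ≤ 4 * Real.log x * (√x - 1) ^ 2 := by
  have hsqrt : 2 ≤ √x := Real.le_sqrt_of_sq_le (by linarith)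
  have hlog : 0 ≤ Real.log x := Real.log_nonneg (by linarith)
  calc klFun x ≤ Real.log x * x := by rw [klFun_apply]; linarith
    _ = Real.log x * √x ^ 2 := by rw [Real.sq_sqrt (by linarith)]
    _ ≤ Real.log x * (2 * (√x - 1)) ^ 2 := by gcongr; linarith
    _ = 4 * Real.log x * (√x - 1) ^ 2 := by ring

theorem klFun_le_max_mul_sqrt_sub_one_sq (hx : 0 ≤ x) (hxM : x ≤ M) :
    klFun x ≤ max 9 (4 * Real.log M) * (√x - 1) ^ 2 := by
  rcases le_total x 4 with hx4 | hx4
  · refine (klFun_le_nine_mul_sqrt_sub_one_sq hx hx4).trans ?_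
    gcongr
    exact le_max_left _ _
  · refine (klFun_le_four_mul_log_mul_sqrt_sub_one_sq hx4).trans ?_
    gcongr
    exact le_max_of_le_right (by gcongr)

end KLFun

theorem mul_sqrt_div_sub_one_sq {a A : ℝ} (hA : 0 < A) :
    A * (√(a / A) - 1) ^ 2 = (√a - √A) ^ 2 := by
  have hsqrt : √A ≠ 0 := (Real.sqrt_pos.2 hA).ne'
  nth_rw 1 [← Real.sq_sqrt hA.le]
  rw [Real.sqrt_div' a hA.le, ← mul_pow, mul_sub, mul_div_cancel₀ _ hsqrt, mul_one]

section Entropy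

variable {E : Type*} [Fintype E] {ρ g : E → ℝ} {M : ℝ}

theorem ent_eq_mean_mul_sum_klFun (hρ : ∑ x, ρ x = 1) (hmean : ∑ x, ρ x * g x ≠ 0) :
    ent ρ g = (∑ x, ρ x * g x) * ∑ x, ρ x * klFun (g x / ∑ y, ρ y * g y) := by
  set A := ∑ x, ρ x * g x with hA
  have hterm (x : E) : A * (ρ x * klFun (g x / A)) =
      ρ x * g x * Real.log (g x) - ρ x * g x * Real.log A + ρ x * A - ρ x * g x := by
    rcases eq_or_ne (g x) 0 with hgx | hgx
    · simp [hgx, klFun_zero, mul_comm]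
    · rw [klFun_apply, Real.log_div hgx hmean]
      field_simp
  simp_rw [mul_sum, hterm, sum_sub_distrib, sum_add_distrib, sum_sub_distrib, ← sum_mul, hρ, ← hA]
  rw [ent, ← hA]
  ring

theorem ent_le_max_mul_sum_sqrt_sub_sqrt_mean_sq (hρ0 : 0 ≤ ρ) (hρ : ∑ x, ρ x = 1) (hg : 0 ≤ g)
    (hgM : ∀ x, g x ≤ M * ∑ y, ρ y * g y) :
    ent ρ g ≤ max 9 (4 * Real.log M) * ∑ x, ρ x * (√(g x) - √(∑ y, ρ y * g y)) ^ 2 := by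
  have hmean : 0 ≤ ∑ x, ρ x * g x := sum_nonneg fun x _ => mul_nonneg (hρ0 x) (hg x)
  rcases hmean.eq_or_lt with hzero | hpos
  · have hg0 (x : E) : g x = 0 := le_antisymm (by simpa [← hzero] using hgM x) (hg x)
    simp [ent, hg0]
  · rw [ent_eq_mean_mul_sum_klFun hρ hpos.ne', mul_sum, mul_sum]
    set A := ∑ x, ρ x * g x
    refine sum_le_sum fun x _ => ?_
    calc A * (ρ x * klFun (g x / A))
        ≤ A * (ρ x * (max 9 (4 * Real.log M) * (√(g x / A) - 1) ^ 2)) := by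
          gcongr
          · exact hρ0 x
          · exact klFun_le_max_mul_sqrt_sub_one_sq (div_nonneg (hg x) hmean)
              ((div_le_iff₀ hpos).2 (hgM x))
      _ = max 9 (4 * Real.log M) * (ρ x * (√(g x) - √A) ^ 2) := by
          rw [← mul_sqrt_div_sub_one_sq hpos]
          ring

theorem le_one_div_mul_mean {r : ℝ} (hr : 0 < r) (hrρ : ∀ x, r ≤ ρ x) (hg : 0 ≤ g) (x : E) :
    g x ≤ 1 / r * ∑ y, ρ y * g y := by
  rw [one_div, le_inv_mul_iff₀ hr]
  calc r * g x ≤ ρ x * g x := mul_le_mul_of_nonneg_right (hrρ x) (hg x)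
    _ ≤ ∑ y, ρ y * g y :=
      single_le_sum (f := fun y => ρ y * g y)
        (fun y _ => mul_nonneg (hr.le.trans (hrρ y)) (hg y)) (mem_univ x)

end Entropy

section Variance

variable {E : Type*} [Fintype E] {ρ : E → ℝ}

theorem nonempty_of_sum_eq_one (hρ : ∑ x, ρ x = 1) : Nonempty E :=
  univ_nonempty_iff.1 (nonempty_of_sum_ne_zero (hρ.trans_ne one_ne_zero))

theorem sq_mean_le_mean_sq (hρ0 : 0 ≤ ρ) (hρ : ∑ x, ρ x = 1) (f : E → ℝ) :
    (∑ x, ρ x * f x) ^ 2 ≤ ∑ x, ρ x * f x ^ 2 :=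
  Real.pow_arith_mean_le_arith_mean_pow_of_even univ ρ f (fun x _ => hρ0 x) hρ even_two

theorem var_nonneg (hρ0 : 0 ≤ ρ) (hρ : ∑ x, ρ x = 1) (f : E → ℝ) : 0 ≤ var ρ f :=
  sub_nonneg.2 (sq_mean_le_mean_sq hρ0 hρ f)

theorem var_eq_zero_of_subsingleton [Subsingleton E] (hρ : ∑ x, ρ x = 1) (f : E → ℝ) :
    var ρ f = 0 := by
  obtain ⟨x⟩ := nonempty_of_sum_eq_one hρ
  rw [Fintype.sum_subsingleton _ x] at hρ
  simp [var, Fintype.sum_subsingleton _ x, hρ]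

theorem sum_abs_sub_sqrt_mean_sq_le_two_mul_var (hρ0 : 0 ≤ ρ) (hρ : ∑ x, ρ x = 1) (f : E → ℝ) :
    ∑ x, ρ x * (|f x| - √(∑ y, ρ y * f y ^ 2)) ^ 2 ≤ 2 * var ρ f := by
  set A := ∑ x, ρ x * f x ^ 2 with hA
  set m := ∑ x, ρ x * f x with hm
  have hA0 : 0 ≤ A := sum_nonneg fun x _ => mul_nonneg (hρ0 x) (sq_nonneg _)
  have habs_mean : |m| ≤ ∑ x, ρ x * |f x| :=
    (abs_sum_le_sum_abs _ _).trans_eq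
      (sum_congr rfl fun x _ => by rw [abs_mul, abs_of_nonneg (hρ0 x)])
  have hsqrt : |m| ≤ √A := Real.abs_le_sqrt (sq_mean_le_mean_sq hρ0 hρ f)
  have hexpand (x : E) : ρ x * (|f x| - √A) ^ 2 =
      ρ x * f x ^ 2 - 2 * √A * (ρ x * |f x|) + ρ x * A := by
    rw [sub_sq, sq_abs, Real.sq_sqrt hA0]
    ring
  calc ∑ x, ρ x * (|f x| - √A) ^ 2 = 2 * (A - √A * ∑ x, ρ x * |f x|) := by
        simp_rw [hexpand, sum_add_distrib, sum_sub_distrib, ← mul_sum, ← sum_mul, hρ, ← hA]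
        ring
    _ ≤ 2 * (A - |m| * |m|) := by gcongr
    _ = 2 * var ρ f := by rw [abs_mul_abs_self, var, ← hA, ← hm, sq]

end Variance

section LowerBound

variable {E : Type*} [Fintype E] {ρ : E → ℝ} {r : ℝ}

theorem ent_sq_le_max_mul_var (hr : 0 < r) (hrρ : ∀ x, r ≤ ρ x) (hρ : ∑ x, ρ x = 1) (f : E → ℝ) :
    ent ρ (fun x => f x ^ 2) ≤ max 9 (4 * Real.log (1 / r)) * (2 * var ρ f) := by
  have hρ0 : 0 ≤ ρ := fun x => hr.le.trans (hrρ x)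
  have hsq : 0 ≤ fun x => f x ^ 2 := fun x => sq_nonneg (f x)
  calc ent ρ (fun x => f x ^ 2)
      ≤ max 9 (4 * Real.log (1 / r)) * ∑ x, ρ x * (|f x| - √(∑ y, ρ y * f y ^ 2)) ^ 2 := by
        simpa only [Real.sqrt_sq_eq_abs] using
          ent_le_max_mul_sum_sqrt_sub_sqrt_mean_sq hρ0 hρ hsq (le_one_div_mul_mean hr hrρ hsq)
    _ ≤ max 9 (4 * Real.log (1 / r)) * (2 * var ρ f) := by
        gcongr
        exact sum_abs_sub_sqrt_mean_sq_le_two_mul_var hρ0 hρ f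

theorem card_le_one_div (hr : 0 < r) (hrρ : ∀ x, r ≤ ρ x) (hρ : ∑ x, ρ x = 1) :
    (Fintype.card E : ℝ) ≤ 1 / r := by
  rw [le_div_iff₀ hr, ← hρ]
  simpa using card_nsmul_le_sum univ ρ r fun x _ => hrρ x

theorem log_one_div_nonneg (hr : 0 < r) (hrρ : ∀ x, r ≤ ρ x) (hρ : ∑ x, ρ x = 1) :
    0 ≤ Real.log (1 / r) := by
  have := nonempty_of_sum_eq_one hρ
  have hcard : (1 : ℝ) ≤ Fintype.card E := by exact_mod_cast Fintype.card_pos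
  exact Real.log_nonneg (hcard.trans (card_le_one_div hr hrρ hρ))

theorem log_two_le_log_one_div [Nontrivial E] (hr : 0 < r) (hrρ : ∀ x, r ≤ ρ x)
    (hρ : ∑ x, ρ x = 1) : Real.log 2 ≤ Real.log (1 / r) := by
  have hcard : (2 : ℝ) ≤ Fintype.card E := by exact_mod_cast Fintype.one_lt_card
  exact Real.log_le_log two_pos (hcard.trans (card_le_one_div hr hrρ hρ))

theorem ent_sq_le_log_mul_var (hr : 0 < r) (hrρ : ∀ x, r ≤ ρ x) (hρ : ∑ x, ρ x = 1)
    (f : E → ℝ) : ent ρ (fun x => f x ^ 2) ≤ 26 * Real.log (1 / r) * var ρ f := by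
  have hmax := ent_sq_le_max_mul_var hr hrρ hρ f
  rcases subsingleton_or_nontrivial E with _ | _
  · simpa [var_eq_zero_of_subsingleton hρ f] using hmax
  · have hlog : Real.log 2 ≤ Real.log (1 / r) := log_two_le_log_one_div hr hrρ hρ
    have hmax_le : max 9 (4 * Real.log (1 / r)) ≤ 13 * Real.log (1 / r) :=
      max_le (by linarith [Real.log_two_gt_d9]) (by linarith [Real.log_two_gt_d9])
    have hvar : 0 ≤ var ρ f := var_nonneg (fun x => hr.le.trans (hrρ x)) hρ f
    calc ent ρ (fun x => f x ^ 2) ≤ max 9 (4 * Real.log (1 / r)) * (2 * var ρ f) := hmax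
      _ ≤ 13 * Real.log (1 / r) * (2 * var ρ f) := by gcongr
      _ = 26 * Real.log (1 / r) * var ρ f := by ring

end LowerBound

theorem stmt2_general {E : Type*} [Fintype E] {ρ f : E → ℝ} {K : E → E → ℝ} {CP : ℝ}
    (hρ0 : ∀ x, 0 < ρ x) (hρ : ∑ x, ρ x = 1) (hP : var ρ f ≤ CP * dirichlet ρ K f) :
    ent ρ (fun x => f x ^ 2) ≤ 26 * CP * Real.log (1 / ⨅ x, ρ x) * dirichlet ρ K f := by
  have := nonempty_of_sum_eq_one hρ
  have hmin_pos : 0 < ⨅ x, ρ x := by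
    obtain ⟨x, hx⟩ := exists_eq_ciInf_of_finite (f := ρ)
    exact hx ▸ hρ0 x
  have hmin_le : ∀ x, ⨅ y, ρ y ≤ ρ x := ciInf_le (Set.finite_range ρ).bddBelow
  have hlog : 0 ≤ Real.log (1 / ⨅ x, ρ x) := log_one_div_nonneg hmin_pos hmin_le hρ
  calc ent ρ (fun x => f x ^ 2) ≤ 26 * Real.log (1 / ⨅ x, ρ x) * var ρ f :=
        ent_sq_le_log_mul_var hmin_pos hmin_le hρ f
    _ ≤ 26 * Real.log (1 / ⨅ x, ρ x) * (CP * dirichlet ρ K f) := by gcongr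
    _ = 26 * CP * Real.log (1 / ⨅ x, ρ x) * dirichlet ρ K f := by ring

theorem stmt2 :
    ∃ C : ℝ, 0 < C ∧
      ∀ (E : Type) [Fintype E] [Nonempty E] (K : E → E → ℝ) (ρ : E → ℝ) (CP : ℝ),
        (∀ x, 0 < ρ x) → (∑ x, ρ x) = 1 →
        (∀ x y, 0 ≤ K x y) → (∀ x, (∑ y, K x y) = 1) →
        (∀ x y, ρ x * K x y = ρ y * K y x) →
        (∀ f : E → ℝ, var ρ f ≤ CP * dirichlet ρ K f) →
        ∀ f : E → ℝ,
          ent ρ (fun x => (f x) ^ 2) ≤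
            C * CP * Real.log (1 / ⨅ x, ρ x) * dirichlet ρ K f :=
  ⟨26, by norm_num, fun _ _ _ _ _ _ hρ0 hρ _ _ _ hP f => stmt2_general hρ0 hρ (hP f)⟩
end
end

section
/- Let K be a reversible substochastic kernel on a finite probability space (E,ρ) and set δ = ρ(1 − K1) (the average killing rate). Assume Ent_ρ(f²) ≤ A·E_K^ρ(f,f) for all nonnegative f. Let T_t = e^{t(K−I)} and u_t = T_t u_0 for any nonnegative u_0. Then for all t ≥ 0: H_ρ(u_t) ≤ e^{−t/A}·H_ρ(u_0) + A·δ·ρ(u_0)·(1 − e^{−t/A}). -/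
open Finset

noncomputable section

/-- Dirichlet form `⟨f, (I−K) f⟩_ρ` for a (possibly substochastic) kernel. -/
def dirichletSub {E : Type*} [Fintype E] (ρ : E → ℝ) (K : Matrix E E ℝ) (f : E → ℝ) : ℝ :=
  ∑ x, ρ x * f x * (f x - ∑ y, K x y * f y)

/-- `H_ρ(u) = ρ[u log(u/ρ(u))]`, with the convention `0 · log 0 = 0`. -/
def Hent {E : Type*} [Fintype E] (ρ u : E → ℝ) : ℝ :=
  ∑ x, ρ x * u x * Real.log (u x / (∑ y, ρ y * u y))

/-- `u_t = e^{t(K−I)} u₀ = e^{−t} Σ_j (t^j/j!) K^j u₀`. -/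
def heatSub {E : Type*} [Fintype E] [DecidableEq E] (K : Matrix E E ℝ) (t : ℝ) (u0 : E → ℝ) :
    E → ℝ :=
  fun x => ∑' j : ℕ, Real.exp (-t) * t ^ j / (Nat.factorial j) * ((K ^ j).mulVec u0 x)

/-!
Along the flow, the relative entropy `H_t = H_ρ(u_t)` satisfies
`dH_t/dt = -⟨log (u_t / m_t), (I - K) u_t⟩_ρ`, where `m_t = ρ(u_t)`. By reversibility,
`⟨g, (I - K) f⟩_ρ` is a killing term `ρ((1 - K1) f g)` plus a symmetric sum over jumps. To compare
it, for `f = u_t` and `g = log (u_t / m_t)`, with the Dirichlet form of `√u_t`, one bounds the jump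
parts by `(√a - √b)² ≤ (a - b) (log a - log b)` and the killing parts by `a ≤ a log (a / m) + m`,
the latter at the cost of an error `δ m_t`. The log-Sobolev inequality for `√u_t` thus yields
`dH_t/dt ≤ -H_t / A + δ m_t`; since killing only decreases the mass `m_t`, Grönwall's inequality
concludes. Initial data with zeros are reached from strictly positive ones by continuity.
-/

open scoped Matrix

section RealAnalysis

theorem sub_le_mul_log_sub_log {a m : ℝ} (ha : 0 < a) (hm : 0 < m) :
    a - m ≤ a * (Real.log a - Real.log m) := by
  have log_bound : 1 - m / a ≤ Real.log a - Real.log m := by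
    simpa only [inv_div, Real.log_div ha.ne' hm.ne'] using
      Real.one_sub_inv_le_log_of_pos (div_pos ha hm)
  calc a - m = a * (1 - m / a) := by field_simp
    _ ≤ a * (Real.log a - Real.log m) := mul_le_mul_of_nonneg_left log_bound ha.le

theorem two_mul_sqrt_sub_sqrt_sq_le {a b : ℝ} (ha : 0 < a) (hb : 0 < b) :
    2 * (√a - √b) ^ 2 ≤ (a - b) * (Real.log a - Real.log b) := by
  have one_sided {x y : ℝ} (hx : 0 < x) (hy : 0 < y) :
      2 * √x * (√x - √y) ≤ x * (Real.log x - Real.log y) :=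
    calc 2 * √x * (√x - √y)
        ≤ 2 * √x * (√x * (Real.log √x - Real.log √y)) := by
          gcongr
          exact sub_le_mul_log_sub_log (Real.sqrt_pos.2 hx) (Real.sqrt_pos.2 hy)
      _ = √x ^ 2 * (Real.log x - Real.log y) := by
          rw [Real.log_sqrt hx.le, Real.log_sqrt hy.le]
          ring
      _ = x * (Real.log x - Real.log y) := by rw [Real.sq_sqrt hx.le]
  linarith [one_sided ha hb, one_sided hb ha]

theorem le_exp_neg_div_mul_add_of_hasDerivAt_le {F F' : ℝ → ℝ} {A c t : ℝ} (hA : A ≠ 0)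
    (hF : ∀ s, 0 ≤ s → HasDerivAt F (F' s) s) (hF' : ∀ s, 0 ≤ s → F' s ≤ (c - F s) / A)
    (ht : 0 ≤ t) :
    F t ≤ Real.exp (-t / A) * F 0 + c * (1 - Real.exp (-t / A)) := by
  have rate_ne_zero : -A⁻¹ ≠ 0 := neg_ne_zero.2 (inv_ne_zero hA)
  have gronwall : F t ≤ gronwallBound (F 0) (-A⁻¹) (c / A) (t - 0) := by
    refine le_gronwallBound_of_liminf_deriv_right_le (f' := F') (b := t)
      (fun s hs => (hF s hs.1).continuousAt.continuousWithinAt)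
      (fun s hs r hr => (hF s hs.1).hasDerivWithinAt.liminf_right_slope_le hr) le_rfl
      (fun s hs => (hF' s hs.1).trans_eq (by ring)) t ⟨ht, le_rfl⟩
  refine gronwall.trans_eq ?_
  have exponent : -A⁻¹ * (t - 0) = -t / A := by ring
  simp only [gronwallBound_of_K_ne_0 rate_ne_zero, exponent]
  field_simp
  ring

theorem mem_closure_setOf_forall_pos {ι : Type*} {u : ι → ℝ} (hu : ∀ x, 0 ≤ u x) :
    u ∈ closure {v : ι → ℝ | ∀ x, 0 < v x} := by
  have pos_eq_pi : {v : ι → ℝ | ∀ x, 0 < v x} = Set.univ.pi fun _ => Set.Ioi 0 := by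
    ext v
    simp
  rw [pos_eq_pi, closure_pi_set, Set.mem_univ_pi]
  simpa only [closure_Ioi, Set.mem_Ici] using hu

end RealAnalysis

section Entropy

variable {E : Type*} [Fintype E] {ρ : E → ℝ}

theorem Hent_eq_ent {u : E → ℝ} (hρ : ∀ x, 0 ≤ ρ x) (hu : ∀ x, 0 ≤ u x) :
    Hent ρ u = ent ρ u := by
  unfold Hent ent
  rw [sum_mul, ← sum_sub_distrib]
  refine sum_congr rfl fun x _ => ?_
  rcases eq_or_ne (ρ x * u x) 0 with hx | hx
  · simp [hx]
  have mass_ne_zero : ∑ y, ρ y * u y ≠ 0 := fun h => hx <|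
    (sum_eq_zero_iff_of_nonneg fun y _ => mul_nonneg (hρ y) (hu y)).1 h x (mem_univ x)
  rw [Real.log_div (right_ne_zero_of_mul hx) mass_ne_zero, mul_sub]

theorem continuous_ent (ρ : E → ℝ) : Continuous (ent ρ) := by
  unfold ent
  simp only [mul_assoc (ρ _)]
  fun_prop

theorem hasDerivAt_sum_mul {u : ℝ → E → ℝ} {u' : E → ℝ} {s : ℝ} (hu : HasDerivAt u u' s) :
    HasDerivAt (fun s => ∑ x, ρ x * u s x) (∑ x, ρ x * u' x) s :=
  HasDerivAt.fun_sum fun x _ => (hasDerivAt_pi.1 hu x).const_mul (ρ x)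

theorem hasDerivAt_ent {u : ℝ → E → ℝ} {u' : E → ℝ} {s : ℝ} (hu : HasDerivAt u u' s)
    (hne : ∀ x, u s x ≠ 0) (hmass : ∑ x, ρ x * u s x ≠ 0) :
    HasDerivAt (fun s => ent ρ (u s))
      (∑ x, ρ x * (Real.log (u s x) - Real.log (∑ y, ρ y * u s y)) * u' x) s := by
  have deriv_mul_log : HasDerivAt (fun s => ∑ x, ρ x * u s x * Real.log (u s x))
      (∑ x, ρ x * ((Real.log (u s x) + 1) * u' x)) s := by
    simp only [mul_assoc (ρ _)]
    exact HasDerivAt.fun_sum fun x _ => HasDerivAt.const_mul (ρ x)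
      ((Real.hasDerivAt_mul_log (hne x)).comp s (hasDerivAt_pi.1 hu x) :)
  have deriv_mass := (Real.hasDerivAt_mul_log hmass).comp s (hasDerivAt_sum_mul hu)
  refine (deriv_mul_log.sub deriv_mass).congr_deriv ?_
  rw [mul_sum, ← sum_sub_distrib]
  exact sum_congr rfl fun x _ => by ring

end Entropy

section DirichletForm

variable {E : Type*} [Fintype E] {ρ : E → ℝ} {K : Matrix E E ℝ}

/-- The killing rate `1 - K1` of a substochastic kernel, so that its average `δ` is
`∑ x, ρ x * killingRate K x`. -/
def killingRate (K : Matrix E E ℝ) (x : E) : ℝ := 1 - ∑ y, K x y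

/-- The bilinear form `⟨g, (I - K) f⟩_ρ` whose diagonal is the Dirichlet form. The generator acts on
the first argument, so the form is symmetric only for reversible kernels. -/
def dirichletBilin (ρ : E → ℝ) (K : Matrix E E ℝ) (f g : E → ℝ) : ℝ :=
  ∑ x, ρ x * g x * (f x - (K *ᵥ f) x)

theorem killingRate_nonneg (hK : ∀ x, ∑ y, K x y ≤ 1) (x : E) : 0 ≤ killingRate K x :=
  sub_nonneg.2 (hK x)

theorem dirichletBilin_eq_killing_add_sum (ρ : E → ℝ) (K : Matrix E E ℝ) (f g : E → ℝ) :
    dirichletBilin ρ K f g = ∑ x, ρ x * killingRate K x * (f x * g x) +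
      ∑ x, ∑ y, ρ x * K x y * ((f x - f y) * g x) := by
  rw [← sum_add_distrib]
  refine sum_congr rfl fun x _ => ?_
  have jump_sum : ∑ y, ρ x * K x y * ((f x - f y) * g x) =
      ρ x * g x * ((∑ y, K x y) * f x - (K *ᵥ f) x) := by
    rw [Matrix.mulVec, dotProduct, sum_mul, ← sum_sub_distrib, mul_sum]
    exact sum_congr rfl fun y _ => by ring
  rw [jump_sum, killingRate]
  ring

theorem dirichletBilin_eq_killing_add_jump (hrev : ∀ x y, ρ x * K x y = ρ y * K y x)
    (f g : E → ℝ) :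
    dirichletBilin ρ K f g = ∑ x, ρ x * killingRate K x * (f x * g x) +
      1 / 2 * ∑ x, ∑ y, ρ x * K x y * ((f x - f y) * (g x - g y)) := by
  have swap : ∑ x, ∑ y, ρ x * K x y * ((f x - f y) * g x) =
      -∑ x, ∑ y, ρ x * K x y * ((f x - f y) * g y) := by
    rw [sum_comm]
    simp only [← sum_neg_distrib]
    refine sum_congr rfl fun x _ => sum_congr rfl fun y _ => ?_
    rw [hrev y x]
    ring
  simp only [dirichletBilin_eq_killing_add_sum, mul_sub (_ - _), mul_sub (_ * _),
    sum_sub_distrib] at swap ⊢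
  linarith

theorem sum_mul_sub_mulVec_nonneg {u : E → ℝ} (hρ : ∀ x, 0 ≤ ρ x) (hK : ∀ x, ∑ y, K x y ≤ 1)
    (hrev : ∀ x y, ρ x * K x y = ρ y * K y x) (hu : ∀ x, 0 ≤ u x) :
    0 ≤ ∑ x, ρ x * (u x - (K *ᵥ u) x) := by
  have killed_mass :
      ∑ x, ρ x * (u x - (K *ᵥ u) x) = ∑ x, ρ x * killingRate K x * u x := by
    simpa [dirichletBilin] using dirichletBilin_eq_killing_add_jump hrev u 1
  rw [killed_mass]
  exact sum_nonneg fun x _ =>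
    mul_nonneg (mul_nonneg (hρ x) (killingRate_nonneg hK x)) (hu x)

theorem dirichletSub_sqrt_le {u : E → ℝ} {m : ℝ} (hρ : ∀ x, 0 ≤ ρ x) (hK0 : ∀ x y, 0 ≤ K x y)
    (hK1 : ∀ x, ∑ y, K x y ≤ 1) (hrev : ∀ x y, ρ x * K x y = ρ y * K y x) (hu : ∀ x, 0 < u x)
    (hm : 0 < m) :
    dirichletSub ρ K (fun x => √(u x)) ≤
      dirichletBilin ρ K u (fun x => Real.log (u x) - Real.log m) +
        (∑ x, ρ x * killingRate K x) * m := by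
  change dirichletBilin ρ K _ _ ≤ _
  rw [dirichletBilin_eq_killing_add_jump hrev, dirichletBilin_eq_killing_add_jump hrev]
  have jump_le : ∑ x, ∑ y, ρ x * K x y * ((√(u x) - √(u y)) * (√(u x) - √(u y))) ≤
      ∑ x, ∑ y, ρ x * K x y * ((u x - u y) *
        ((Real.log (u x) - Real.log m) - (Real.log (u y) - Real.log m))) := by
    refine sum_le_sum fun x _ => sum_le_sum fun y _ =>
      mul_le_mul_of_nonneg_left ?_ (mul_nonneg (hρ x) (hK0 x y))
    linarith [two_mul_sqrt_sub_sqrt_sq_le (hu x) (hu y), sq_nonneg (√(u x) - √(u y))]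
  have killing_le : ∑ x, ρ x * killingRate K x * (√(u x) * √(u x)) ≤
      ∑ x, ρ x * killingRate K x * (u x * (Real.log (u x) - Real.log m)) +
        (∑ x, ρ x * killingRate K x) * m := by
    rw [sum_mul, ← sum_add_distrib]
    gcongr with x
    rw [Real.mul_self_sqrt (hu x).le, ← mul_add]
    gcongr
    · exact mul_nonneg (hρ x) (killingRate_nonneg hK1 x)
    · linarith [sub_le_mul_log_sub_log (hu x) hm]
  linarith

theorem ent_le_of_logSobolev {u : E → ℝ} {A m : ℝ} (hρ : ∀ x, 0 ≤ ρ x) (hK0 : ∀ x y, 0 ≤ K x y)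
    (hK1 : ∀ x, ∑ y, K x y ≤ 1) (hrev : ∀ x y, ρ x * K x y = ρ y * K y x) (hA : 0 ≤ A)
    (hLS : ∀ f : E → ℝ, (∀ x, 0 ≤ f x) → ent ρ (fun x => f x ^ 2) ≤ A * dirichletSub ρ K f)
    (hu : ∀ x, 0 < u x) (hm : 0 < m) :
    ent ρ u ≤ A * (dirichletBilin ρ K u (fun x => Real.log (u x) - Real.log m) +
      (∑ x, ρ x * killingRate K x) * m) :=
  calc ent ρ u = ent ρ (fun x => √(u x) ^ 2) := by simp only [Real.sq_sqrt (hu _).le]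
    _ ≤ A * dirichletSub ρ K (fun x => √(u x)) := hLS _ fun x => Real.sqrt_nonneg _
    _ ≤ _ := mul_le_mul_of_nonneg_left (dirichletSub_sqrt_le hρ hK0 hK1 hrev hu hm) hA

end DirichletForm

section HeatSemigroup

open scoped Matrix.Norms.Operator

variable {E : Type*} [Fintype E] [DecidableEq E] {K : Matrix E E ℝ}

theorem exp_smul_sub_one (K : Matrix E E ℝ) (t : ℝ) :
    NormedSpace.exp (t • (K - 1)) = Real.exp (-t) • NormedSpace.exp (t • K) := by
  have exp_scalar : NormedSpace.exp (algebraMap ℝ (Matrix E E ℝ) (-t)) =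
      algebraMap ℝ (Matrix E E ℝ) (Real.exp (-t)) := by
    rw [Real.exp_eq_exp_ℝ]
    exact (NormedSpace.algebraMap_exp_comm (-t)).symm
  have split : t • (K - 1) = algebraMap ℝ (Matrix E E ℝ) (-t) + t • K := by
    rw [Algebra.algebraMap_eq_smul_one, smul_sub, neg_smul]
    abel
  rw [split, Matrix.exp_add_of_commute _ _ (Algebra.commute_algebraMap_left _ _), exp_scalar,
    ← Algebra.smul_def]

theorem hasSum_heatSub (K : Matrix E E ℝ) (t : ℝ) (u : E → ℝ) (x : E) :
    HasSum (fun j : ℕ => Real.exp (-t) * t ^ j / j.factorial * (K ^ j *ᵥ u) x)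
      ((NormedSpace.exp (t • (K - 1)) *ᵥ u) x) := by
  have mulVec_series := (NormedSpace.exp_series_hasSum_exp' (𝕂 := ℝ) (t • K)).map
    (Matrix.mulVec.addMonoidHomLeft u) (continuous_id.matrix_mulVec continuous_const)
  rw [exp_smul_sub_one, Matrix.smul_mulVec]
  refine ((Pi.hasSum.1 mulVec_series x).mul_left (Real.exp (-t))).congr_fun fun j => ?_
  simp only [Function.comp_apply, Matrix.mulVec.addMonoidHomLeft, AddMonoidHom.coe_mk,
    ZeroHom.coe_mk, smul_pow, Matrix.smul_mulVec, Pi.smul_apply, smul_eq_mul]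
  ring

theorem heatSub_eq_exp_mulVec (K : Matrix E E ℝ) (t : ℝ) (u : E → ℝ) :
    heatSub K t u = NormedSpace.exp (t • (K - 1)) *ᵥ u :=
  funext fun x => (hasSum_heatSub K t u x).tsum_eq

theorem heatSub_zero (K : Matrix E E ℝ) (u : E → ℝ) : heatSub K 0 u = u := by
  simp [heatSub_eq_exp_mulVec]

theorem continuous_heatSub (K : Matrix E E ℝ) (t : ℝ) : Continuous (heatSub K t) := by
  simp only [funext (heatSub_eq_exp_mulVec K t)]
  exact continuous_const.matrix_mulVec continuous_id

theorem hasDerivAt_heatSub (K : Matrix E E ℝ) (u : E → ℝ) (t : ℝ) :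
    HasDerivAt (fun s => heatSub K s u) (K *ᵥ heatSub K t u - heatSub K t u) t := by
  let mulVecRight : Matrix E E ℝ →L[ℝ] E → ℝ :=
    LinearMap.toContinuousLinearMap ((Matrix.mulVecBilin ℝ ℝ).flip u)
  have generator :
      K *ᵥ heatSub K t u - heatSub K t u =
        ((K - 1) * NormedSpace.exp (t • (K - 1))) *ᵥ u := by
    rw [heatSub_eq_exp_mulVec, ← Matrix.mulVec_mulVec, Matrix.sub_mulVec, Matrix.one_mulVec]
  rw [generator, funext fun s => heatSub_eq_exp_mulVec K s u]
  exact mulVecRight.hasFDerivAt.comp_hasDerivAt t (hasDerivAt_exp_smul_const' (K - 1) t)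

theorem pow_mulVec_nonneg {u : E → ℝ} (hK : ∀ x y, 0 ≤ K x y) (hu : ∀ x, 0 ≤ u x) (j : ℕ)
    (x : E) : 0 ≤ (K ^ j *ᵥ u) x := by
  induction j generalizing x with
  | zero => simpa using hu x
  | succ j ih =>
    rw [pow_succ', ← Matrix.mulVec_mulVec]
    exact sum_nonneg fun y _ => mul_nonneg (hK x y) (ih y)

theorem exp_neg_mul_le_heatSub {u : E → ℝ} {t : ℝ} (hK : ∀ x y, 0 ≤ K x y)
    (hu : ∀ x, 0 ≤ u x) (ht : 0 ≤ t) (x : E) : Real.exp (-t) * u x ≤ heatSub K t u x := by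
  have zeroth_term_le := le_hasSum (hasSum_heatSub K t u x) 0 fun j _ =>
    mul_nonneg (by positivity) (pow_mulVec_nonneg hK hu j x)
  simpa [heatSub_eq_exp_mulVec] using zeroth_term_le

theorem heatSub_nonneg {u : E → ℝ} {t : ℝ} (hK : ∀ x y, 0 ≤ K x y) (hu : ∀ x, 0 ≤ u x)
    (ht : 0 ≤ t) (x : E) : 0 ≤ heatSub K t u x :=
  (mul_nonneg (Real.exp_nonneg _) (hu x)).trans (exp_neg_mul_le_heatSub hK hu ht x)

theorem heatSub_pos {u : E → ℝ} {t : ℝ} (hK : ∀ x y, 0 ≤ K x y) (hu : ∀ x, 0 < u x)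
    (ht : 0 ≤ t) (x : E) : 0 < heatSub K t u x :=
  (mul_pos (Real.exp_pos _) (hu x)).trans_le
    (exp_neg_mul_le_heatSub hK (fun y => (hu y).le) ht x)

end HeatSemigroup

section EntropyDecay

variable {E : Type*} [Fintype E] [DecidableEq E] {ρ : E → ℝ} {K : Matrix E E ℝ}

theorem sum_mul_heatSub_le {u : E → ℝ} {t : ℝ} (hρ : ∀ x, 0 ≤ ρ x) (hK0 : ∀ x y, 0 ≤ K x y)
    (hK1 : ∀ x, ∑ y, K x y ≤ 1) (hrev : ∀ x y, ρ x * K x y = ρ y * K y x) (hu : ∀ x, 0 ≤ u x)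
    (ht : 0 ≤ t) : ∑ x, ρ x * heatSub K t u x ≤ ∑ x, ρ x * u x := by
  have deriv_mass (s : ℝ) := hasDerivAt_sum_mul (ρ := ρ) (hasDerivAt_heatSub K u s)
  have mass_antitone : AntitoneOn (fun s => ∑ x, ρ x * heatSub K s u x) (Set.Ici 0) := by
    refine antitoneOn_of_hasDerivWithinAt_nonpos (convex_Ici 0)
      (fun s _ => (deriv_mass s).continuousAt.continuousWithinAt)
      (fun s _ => (deriv_mass s).hasDerivWithinAt) fun s hs => ?_
    have killed_mass := sum_mul_sub_mulVec_nonneg hρ hK1 hrev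
      (heatSub_nonneg hK0 hu (interior_subset hs))
    simp only [mul_sub, Pi.sub_apply, sum_sub_distrib] at killed_mass ⊢
    linarith
  simpa only [heatSub_zero] using mass_antitone Set.self_mem_Ici ht ht

theorem hasDerivAt_ent_heatSub {u : E → ℝ} {s : ℝ} (hne : ∀ x, heatSub K s u x ≠ 0)
    (hmass : ∑ x, ρ x * heatSub K s u x ≠ 0) :
    HasDerivAt (fun s => ent ρ (heatSub K s u))
      (-dirichletBilin ρ K (heatSub K s u) fun x =>
        Real.log (heatSub K s u x) - Real.log (∑ y, ρ y * heatSub K s u y)) s := by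
  refine (hasDerivAt_ent (hasDerivAt_heatSub K u s) hne hmass).congr_deriv ?_
  rw [dirichletBilin, ← sum_neg_distrib]
  exact sum_congr rfl fun x _ => by rw [Pi.sub_apply, ← mul_neg, neg_sub]

theorem ent_heatSub_le_of_pos {u : E → ℝ} {A t : ℝ} (hρ : ∀ x, 0 ≤ ρ x)
    (hK0 : ∀ x y, 0 ≤ K x y) (hK1 : ∀ x, ∑ y, K x y ≤ 1)
    (hrev : ∀ x y, ρ x * K x y = ρ y * K y x) (hA : 0 < A)
    (hLS : ∀ f : E → ℝ, (∀ x, 0 ≤ f x) → ent ρ (fun x => f x ^ 2) ≤ A * dirichletSub ρ K f)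
    (hu : ∀ x, 0 < u x) (ht : 0 ≤ t) :
    ent ρ (heatSub K t u) ≤ Real.exp (-t / A) * ent ρ u +
      A * (∑ x, ρ x * killingRate K x) * (∑ x, ρ x * u x) * (1 - Real.exp (-t / A)) := by
  rcases eq_or_ne ρ 0 with rfl | hρ_ne
  · simp [ent]
  obtain ⟨x₀, hx₀⟩ := Function.ne_iff.1 hρ_ne
  have u_pos {s : ℝ} (hs : 0 ≤ s) (x : E) : 0 < heatSub K s u x := heatSub_pos hK0 hu hs x
  have mass_pos {s : ℝ} (hs : 0 ≤ s) : 0 < ∑ x, ρ x * heatSub K s u x :=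
    sum_pos' (fun x _ => mul_nonneg (hρ x) (u_pos hs x).le)
      ⟨x₀, mem_univ x₀, mul_pos ((hρ x₀).lt_of_ne' hx₀) (u_pos hs x₀)⟩
  have gronwall := le_exp_neg_div_mul_add_of_hasDerivAt_le
    (c := A * (∑ x, ρ x * killingRate K x) * ∑ x, ρ x * u x) hA.ne'
    (fun s hs => hasDerivAt_ent_heatSub (fun x => (u_pos hs x).ne') (mass_pos hs).ne')
    (fun s hs => ?_) ht
  · simpa only [heatSub_zero] using gronwall
  have logSobolev := ent_le_of_logSobolev hρ hK0 hK1 hrev hA.le hLS (u_pos hs) (mass_pos hs)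
  have mass_le : A * (∑ x, ρ x * killingRate K x) * ∑ x, ρ x * heatSub K s u x ≤
      A * (∑ x, ρ x * killingRate K x) * ∑ x, ρ x * u x :=
    mul_le_mul_of_nonneg_left (sum_mul_heatSub_le hρ hK0 hK1 hrev (fun x => (hu x).le) hs) <|
      mul_nonneg hA.le <| sum_nonneg fun x _ => mul_nonneg (hρ x) (killingRate_nonneg hK1 x)
  rw [le_div_iff₀ hA]
  linarith

theorem stmt5_general {u : E → ℝ} {A t : ℝ} (hρ : ∀ x, 0 ≤ ρ x)
    (hK0 : ∀ x y, 0 ≤ K x y) (hK1 : ∀ x, ∑ y, K x y ≤ 1)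
    (hrev : ∀ x y, ρ x * K x y = ρ y * K y x) (hA : 0 < A)
    (hLS : ∀ f : E → ℝ, (∀ x, 0 ≤ f x) → ent ρ (fun x => f x ^ 2) ≤ A * dirichletSub ρ K f)
    (hu : ∀ x, 0 ≤ u x) (ht : 0 ≤ t) :
    Hent ρ (heatSub K t u) ≤ Real.exp (-t / A) * Hent ρ u +
      A * (∑ x, ρ x * (1 - ∑ y, K x y)) * (∑ x, ρ x * u x) * (1 - Real.exp (-t / A)) := by
  rw [Hent_eq_ent hρ (heatSub_nonneg hK0 hu ht), Hent_eq_ent hρ hu]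
  have ent_heatSub_continuous : Continuous fun v => ent ρ (heatSub K t v) :=
    (continuous_ent ρ).comp (continuous_heatSub K t)
  have ent_continuous := continuous_ent ρ
  exact le_on_closure
    (fun v hv => ent_heatSub_le_of_pos hρ hK0 hK1 hrev hA hLS hv ht)
    ent_heatSub_continuous.continuousOn (by fun_prop) (mem_closure_setOf_forall_pos hu)

end EntropyDecay

theorem stmt5 :
    ∀ (E : Type) [Fintype E] [DecidableEq E] (ρ : E → ℝ) (K : Matrix E E ℝ) (A : ℝ)
      (u0 : E → ℝ),
      -- (E, ρ) is a finite probability space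
      (∀ x, 0 ≤ ρ x) → (∑ x, ρ x) = 1 →
      -- K is substochastic and reversible with respect to ρ
      (∀ x y, 0 ≤ K x y) → (∀ x, (∑ y, K x y) ≤ 1) →
      (∀ x y, ρ x * K x y = ρ y * K y x) →
      0 < A →
      -- log-Sobolev inequality for the substochastic kernel
      (∀ f : E → ℝ, (∀ x, 0 ≤ f x) →
        ent ρ (fun x => (f x) ^ 2) ≤ A * dirichletSub ρ K f) →
      (∀ x, 0 ≤ u0 x) →
      ∀ t : ℝ, 0 ≤ t →
        Hent ρ (heatSub K t u0) ≤
          Real.exp (-t / A) * Hent ρ u0 +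
            A * (∑ x, ρ x * (1 - ∑ y, K x y)) * (∑ x, ρ x * u0 x) *
              (1 - Real.exp (-t / A)) := by
  intro E _ _ ρ K A u0 hρ _ hK0 hK1 hrev hA hLS hu0 t ht
  exact stmt5_general hρ hK0 hK1 hrev hA hLS hu0 ht
end
end

section
/- Let ρ be a probability measure on a finite set E, let u ≥ 0 be a function on E, and set λ = u·ρ (a subprobability measure) and m = ρ(u). Then ‖λ − ρ‖_TV ≤ (1 − m) + sqrt(H_ρ(u)/2). -/
open Finset

noncomputable section

/-!
By the triangle inequality through the measure `m·ρ`, the total variation distance between `u·ρ`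
and `ρ` is at most `|1 - m| / 2 + ρ|u - m| / 2`. Here `ρ|u - m|` is controlled by Pinsker's
inequality `(ρ|u - m|)² ≤ 2 m H_ρ(u)`, which follows by Cauchy-Schwarz from the pointwise bound
`3 (v - 1)² ≤ (2 v + 4) (v log v + 1 - v)` at `v = u / m`.
-/

open InformationTheory

/-- The difference of the two sides of the pointwise Pinsker bound
`3 (v - 1)² ≤ (2 v + 4) (v log v + 1 - v)`. -/
def pinskerGap (v : ℝ) : ℝ :=
  (2 * v + 4) * klFun v - 3 * (v - 1) ^ 2

theorem hasDerivAt_pinskerGap {v : ℝ} (hv : v ≠ 0) :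
    HasDerivAt pinskerGap (2 * klFun v + (2 * v + 4) * Real.log v - 6 * (v - 1)) v := by
  have hlin : HasDerivAt (fun x : ℝ ↦ 2 * x + 4) 2 v := by
    simpa using ((hasDerivAt_id v).const_mul 2).add_const 4
  have hsq : HasDerivAt (fun x : ℝ ↦ 3 * (x - 1) ^ 2) (6 * (v - 1)) v :=
    ((((hasDerivAt_id v).sub_const 1).pow 2).const_mul 3).congr_deriv (by simp; ring)
  exact (hlin.mul (hasDerivAt_klFun hv)).sub hsq

theorem hasDerivAt_deriv_pinskerGap {v : ℝ} (hv : v ≠ 0) :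
    HasDerivAt (fun x ↦ 2 * klFun x + (2 * x + 4) * Real.log x - 6 * (x - 1))
      (4 * (Real.log v - (1 - v⁻¹))) v := by
  have hlin : HasDerivAt (fun x : ℝ ↦ 2 * x + 4) 2 v := by
    simpa using ((hasDerivAt_id v).const_mul 2).add_const 4
  have hsub : HasDerivAt (fun x : ℝ ↦ 6 * (x - 1)) 6 v := by
    simpa using ((hasDerivAt_id v).sub_const 1).const_mul 6
  refine ((((hasDerivAt_klFun hv).const_mul 2).add
    (hlin.mul (Real.hasDerivAt_log hv))).sub hsub).congr_deriv ?_
  field_simp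
  ring

theorem convexOn_pinskerGap : ConvexOn ℝ (Set.Ici 0) pinskerGap := by
  have hcont : Continuous pinskerGap := by
    unfold pinskerGap
    fun_prop
  refine convexOn_of_hasDerivWithinAt2_nonneg (convex_Ici 0) hcont.continuousOn
    (f' := fun x ↦ 2 * klFun x + (2 * x + 4) * Real.log x - 6 * (x - 1))
    (f'' := fun x ↦ 4 * (Real.log x - (1 - x⁻¹))) ?_ ?_ ?_ <;>
    rw [interior_Ici] <;> intro x (hx : 0 < x)
  · exact (hasDerivAt_pinskerGap hx.ne').hasDerivWithinAt
  · exact (hasDerivAt_deriv_pinskerGap hx.ne').hasDerivWithinAt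
  · exact mul_nonneg zero_le_four (sub_nonneg.2 (Real.one_sub_inv_le_log_of_pos hx))

theorem pinskerGap_nonneg {v : ℝ} (hv : 0 ≤ v) : 0 ≤ pinskerGap v := by
  have hderiv : HasDerivAt pinskerGap 0 1 :=
    (hasDerivAt_pinskerGap one_ne_zero).congr_deriv (by simp [klFun_one])
  have hmin : IsMinOn pinskerGap (Set.Ici 0) 1 :=
    convexOn_pinskerGap.isMinOn_of_rightDeriv_eq_zero (by simp)
      (hderiv.hasDerivWithinAt.derivWithin (uniqueDiffWithinAt_Ioi 1))
  simpa [pinskerGap, klFun_one] using hmin hv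

theorem three_mul_sq_sub_one_le_mul_klFun {v : ℝ} (hv : 0 ≤ v) :
    3 * (v - 1) ^ 2 ≤ (2 * v + 4) * klFun v :=
  sub_nonneg.1 (pinskerGap_nonneg hv)

theorem three_mul_sq_sum_mul_abs_sub_one_le {ι : Type*} (s : Finset ι) {ρ v : ι → ℝ}
    (hρ : ∀ i ∈ s, 0 ≤ ρ i) (hv : ∀ i ∈ s, 0 ≤ v i) :
    3 * (∑ i ∈ s, ρ i * |v i - 1|) ^ 2 ≤
      (2 * ∑ i ∈ s, ρ i * v i + 4 * ∑ i ∈ s, ρ i) * ∑ i ∈ s, ρ i * klFun (v i) := by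
  have hpointwise : ∀ i ∈ s,
      (ρ i * |v i - 1|) ^ 2 ≤ ρ i * ((2 * v i + 4) / 3) * (ρ i * klFun (v i)) := fun i hi ↦ by
    have := mul_le_mul_of_nonneg_left (three_mul_sq_sub_one_le_mul_klFun (hv i hi))
      (sq_nonneg (ρ i))
    rw [mul_pow, sq_abs]
    linarith
  have hcauchy := sum_sq_le_sum_mul_sum_of_sq_le_mul s
    (fun i hi ↦ mul_nonneg (hρ i hi) (by linarith [hv i hi]))
    (fun i hi ↦ mul_nonneg (hρ i hi) (klFun_nonneg (hv i hi))) hpointwise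
  have hweight : 3 * ∑ i ∈ s, ρ i * ((2 * v i + 4) / 3) =
      2 * ∑ i ∈ s, ρ i * v i + 4 * ∑ i ∈ s, ρ i := by
    simp only [mul_sum, ← sum_add_distrib]
    exact sum_congr rfl fun i _ ↦ by ring
  rw [← hweight]
  linarith

section Entropy

variable {E : Type*} [Fintype E] {ρ u : E → ℝ}

theorem hent_eq_mean_mul_sum_klFun (hρ_sum : ∑ x, ρ x = 1) :
    Hent ρ u = (∑ x, ρ x * u x) * ∑ x, ρ x * klFun (u x / ∑ y, ρ y * u y) := by
  unfold Hent
  generalize hm : ∑ x, ρ x * u x = m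
  rcases eq_or_ne m 0 with rfl | hm0
  · simp
  have hcentered : ∑ x, ρ x * (m - u x) = 0 := by
    simp only [mul_sub, sum_sub_distrib, ← sum_mul, hρ_sum, hm, one_mul, sub_self]
  rw [mul_sum, ← add_zero (∑ x, _ * Real.log _), ← hcentered, ← sum_add_distrib]
  refine sum_congr rfl fun x _ ↦ ?_
  rw [klFun_apply]
  field_simp
  ring

theorem hent_nonneg (hρ : ∀ x, 0 ≤ ρ x) (hρ_sum : ∑ x, ρ x = 1) (hu : ∀ x, 0 ≤ u x) :
    0 ≤ Hent ρ u := by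
  have hm : 0 ≤ ∑ x, ρ x * u x := sum_nonneg fun x _ ↦ mul_nonneg (hρ x) (hu x)
  rw [hent_eq_mean_mul_sum_klFun hρ_sum]
  exact mul_nonneg hm
    (sum_nonneg fun x _ ↦ mul_nonneg (hρ x) (klFun_nonneg (div_nonneg (hu x) hm)))

theorem sq_sum_mul_abs_sub_mean_le (hρ : ∀ x, 0 ≤ ρ x) (hρ_sum : ∑ x, ρ x = 1)
    (hu : ∀ x, 0 ≤ u x) :
    (∑ x, ρ x * |u x - ∑ y, ρ y * u y|) ^ 2 ≤ 2 * ((∑ x, ρ x * u x) * Hent ρ u) := by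
  have hρu : ∀ x, 0 ≤ ρ x * u x := fun x ↦ mul_nonneg (hρ x) (hu x)
  have hm : 0 ≤ ∑ x, ρ x * u x := sum_nonneg fun x _ ↦ hρu x
  rw [hent_eq_mean_mul_sum_klFun hρ_sum]
  generalize hmean : ∑ x, ρ x * u x = m at hm ⊢
  rcases hm.eq_or_lt with rfl | hm_pos
  · have hzero := (sum_eq_zero_iff_of_nonneg fun x _ ↦ hρu x).1 hmean
    simp [abs_of_nonneg (hu _), hzero]
  have hnormalized : ∑ x, ρ x * (u x / m) = 1 := by
    simp only [← mul_div_assoc, ← sum_div, hmean, div_self hm_pos.ne']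
  have hscale : ∑ x, ρ x * |u x - m| = m * ∑ x, ρ x * |u x / m - 1| := by
    rw [mul_sum]
    refine sum_congr rfl fun x _ ↦ ?_
    rw [div_sub_one hm_pos.ne', abs_div, abs_of_pos hm_pos]
    field_simp
  have hpinsker := three_mul_sq_sum_mul_abs_sub_one_le univ (fun x _ ↦ hρ x)
    (fun x _ ↦ div_nonneg (hu x) hm)
  rw [hnormalized, hρ_sum] at hpinsker
  rw [hscale, mul_pow]
  linarith [mul_le_mul_of_nonneg_left hpinsker (sq_nonneg m)]

theorem sum_abs_mul_sub_le (hρ : ∀ x, 0 ≤ ρ x) (hρ_sum : ∑ x, ρ x = 1) (m : ℝ) :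
    ∑ x, |u x * ρ x - ρ x| ≤ |1 - m| + ∑ x, ρ x * |u x - m| :=
  calc ∑ x, |u x * ρ x - ρ x|
    _ = ∑ x, ρ x * |u x - 1| := sum_congr rfl fun x _ ↦ by
      rw [← sub_one_mul, abs_mul, abs_of_nonneg (hρ x), mul_comm]
    _ ≤ ∑ x, ρ x * (|u x - m| + |m - 1|) :=
      sum_le_sum fun x _ ↦ mul_le_mul_of_nonneg_left (abs_sub_le _ _ _) (hρ x)
    _ = |1 - m| + ∑ x, ρ x * |u x - m| := by
      simp only [mul_add, sum_add_distrib, ← sum_mul, hρ_sum, one_mul]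
      rw [abs_sub_comm m, add_comm]

theorem stmt6_general (hρ : ∀ x, 0 ≤ ρ x) (hρ_sum : ∑ x, ρ x = 1) (hu : ∀ x, 0 ≤ u x) :
    (1 / 2) * ∑ x, |u x * ρ x - ρ x| ≤
      |1 - ∑ x, ρ x * u x| / 2 + √((∑ x, ρ x * u x) * Hent ρ u / 2) := by
  have htriangle := sum_abs_mul_sub_le (u := u) hρ hρ_sum (∑ x, ρ x * u x)
  have hpinsker : (∑ x, ρ x * |u x - ∑ y, ρ y * u y|) / 2 ≤
      √((∑ x, ρ x * u x) * Hent ρ u / 2) :=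
    Real.le_sqrt_of_sq_le (by linarith [sq_sum_mul_abs_sub_mean_le hρ hρ_sum hu])
  linarith

end Entropy

theorem stmt6 :
    ∀ (E : Type) [Fintype E] (ρ u : E → ℝ),
      -- ρ is a probability measure on E
      (∀ x, 0 ≤ ρ x) → (∑ x, ρ x) = 1 →
      -- u is nonnegative, and λ = u·ρ is a subprobability with mass m = ρ(u)
      (∀ x, 0 ≤ u x) → (∑ x, ρ x * u x) ≤ 1 →
      -- ‖λ − ρ‖_TV ≤ (1 − m) + sqrt(H_ρ(u)/2)
      (1 / 2) * (∑ x, |u x * ρ x - ρ x|) ≤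
        (1 - ∑ x, ρ x * u x) + Real.sqrt (Hent ρ u / 2) := by
  intro E _ ρ u hρ hρ_sum hu hm
  refine (stmt6_general hρ hρ_sum hu).trans (add_le_add ?_ (Real.sqrt_le_sqrt ?_))
  · rw [abs_of_nonneg (sub_nonneg.2 hm)]
    exact half_le_self (sub_nonneg.2 hm)
  · gcongr
    exact mul_le_of_le_one_left (hent_nonneg hρ hρ_sum hu) hm
end
end

section
/- Let p be an odd prime, H the Heisenberg group on a 2m-dimensional symplectic F_p-space with m ≥ 1, and r ≥ 2m+1. Then the power-averaged product-replacement (PA-PRA) chain is irreducible on Ω = V_r(H): for any two generating tuples g, g' ∈ Ω there is a finite sequence of left and right moves T^R_{j→i,a}, T^L_{j→i,a} taking g to g'. -/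
noncomputable section

/-- Data of a bilinear form on `W` turning `W × ZMod p` into a Heisenberg group. -/
class HeisData (p : ℕ) (W : Type*) [Fact (Nat.Prime p)] [AddCommGroup W]
    [Module (ZMod p) W] where
  ω : W →ₗ[ZMod p] W →ₗ[ZMod p] ZMod p

/-- The Heisenberg group structure on `W × ZMod p`:
`(v,z)·(w,t) = (v+w, z+t+ω(v,w)/2)`. -/
instance heisGroup (p : ℕ) (W : Type*) [Fact (Nat.Prime p)] [AddCommGroup W]
    [Module (ZMod p) W] [HeisData p W] : Group (W × ZMod p) where
  mul x y := (x.1 + y.1, x.2 + y.2 + (2 : ZMod p)⁻¹ * HeisData.ω x.1 y.1)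
  one := ((0 : W), (0 : ZMod p))
  inv x := (-x.1, -x.2 + (2 : ZMod p)⁻¹ * HeisData.ω x.1 x.1)
  mul_assoc a b c := by
    refine Prod.ext ?_ ?_
    · show a.1 + b.1 + c.1 = a.1 + (b.1 + c.1)
      exact add_assoc _ _ _
    · show a.2 + b.2 + (2 : ZMod p)⁻¹ * HeisData.ω a.1 b.1 + c.2 +
          (2 : ZMod p)⁻¹ * HeisData.ω (a.1 + b.1) c.1 =
        a.2 + (b.2 + c.2 + (2 : ZMod p)⁻¹ * HeisData.ω b.1 c.1) +
          (2 : ZMod p)⁻¹ * HeisData.ω a.1 (b.1 + c.1)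
      simp only [map_add, LinearMap.add_apply]
      ring
  one_mul a := by
    refine Prod.ext ?_ ?_
    · show 0 + a.1 = a.1; simp
    · show 0 + a.2 + (2 : ZMod p)⁻¹ * HeisData.ω 0 a.1 = a.2
      simp
  mul_one a := by
    refine Prod.ext ?_ ?_
    · show a.1 + 0 = a.1; simp
    · show a.2 + 0 + (2 : ZMod p)⁻¹ * HeisData.ω a.1 0 = a.2
      simp
  inv_mul_cancel a := by
    refine Prod.ext ?_ ?_
    · show -a.1 + a.1 = 0; simp
    · show -a.2 + (2 : ZMod p)⁻¹ * HeisData.ω a.1 a.1 + a.2 +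
          (2 : ZMod p)⁻¹ * HeisData.ω (-a.1) a.1 = 0
      simp only [map_neg, LinearMap.neg_apply]
      ring

/-- Tuples generating the whole group. -/
def genSet (r : ℕ) (H : Type*) [Group H] : Set (Fin r → H) :=
  {g | Subgroup.closure (Set.range g) = ⊤}

/-- One PA-PRA move: for distinct `i ≠ j` and `a ∈ F_p`, replace `g i` by
`g i * (g j)^a` (right move) or by `(g j)^a * g i` (left move). -/
def paMove (p : ℕ) {r : ℕ} {H : Type*} [Group H] (g g' : Fin r → H) : Prop :=
  ∃ (i j : Fin r) (a : ZMod p), i ≠ j ∧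
    (g' = Function.update g i (g i * (g j) ^ (a.val)) ∨
     g' = Function.update g i ((g j) ^ (a.val) * g i))

/-!
The moves act on the `W`-components as elementary row operations. Elementary operations preserve
determinants, but as `r` exceeds `dim W`, some entry always lies in the span of the others and can
be overwritten at will; using it as workspace, any other entry can be rescaled. Hence `GL_r` orbits
are connected, and any two spanning tuples of `r` vectors lie in one such orbit.

It remains to correct the central components. A left move followed by a right move conjugates
`g i` by a power of `g j`, which shifts the central component of `g i` by any multiple of the
commutator form at the two vectors. If the vector of `g i` lies in the radical of that form,
multiply `g i` by some `g j` outside the radical, correct the product, and divide again.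
-/

open Function Relation Module

section Tuples

variable {ι α : Type*} [Finite ι] [DecidableEq ι] {R : (ι → α) → (ι → α) → Prop}

lemma reflTransGen_of_forall_update {f g : ι → α}
    (h : ∀ u i, (∀ k, u k = f k ∨ u k = g k) → u i = f i →
      ReflTransGen R u (update u i (g i))) :
    ReflTransGen R f g := by
  have := Fintype.ofFinite ι
  suffices ∀ s : Finset ι, ReflTransGen R f (s.piecewise g f) by
    simpa using this Finset.univ
  intro s
  induction s using Finset.induction_on with
  | empty => simpa using ReflTransGen.refl
  | insert i s hi ih =>
    rw [Finset.piecewise_insert]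
    refine ih.trans (h _ i (fun k ↦ ?_) (Finset.piecewise_eq_of_notMem _ _ _ hi))
    by_cases hk : k ∈ s <;> simp [hk]

end Tuples

section VectorTuples

variable {ι K W : Type*} [Field K] [AddCommGroup W] [Module K W]

lemma exists_mem_span_image_compl [Fintype ι] [Module.Finite K W]
    (hcard : finrank K W < Fintype.card ι) (v : ι → W) :
    ∃ j, v j ∈ Submodule.span K (v '' {j}ᶜ) := by
  have hdep : ¬LinearIndependent K v := fun h ↦ hcard.not_ge h.fintype_card_le_finrank
  simpa [linearIndependent_iff_notMem_span, Set.compl_eq_univ_sdiff] using hdep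

variable [DecidableEq ι]

variable (K) in
/-- An elementary row operation on a tuple of vectors: add a multiple of one entry to another. It is
the effect of a PA-PRA move on the `W`-components. -/
def vecMove (v v' : ι → W) : Prop :=
  ∃ (i j : ι) (a : K), i ≠ j ∧ v' = update v i (v i + a • v j)

lemma reflTransGen_vecMove_update_add {v : ι → W} {j : ι} {w : W}
    (hw : w ∈ Submodule.span K (v '' {j}ᶜ)) :
    ReflTransGen (vecMove K) v (update v j (v j + w)) := by
  suffices ∀ x, ReflTransGen (vecMove K) (update v j x) (update v j (x + w)) by
    simpa using this (v j)
  induction hw using Submodule.closure_induction with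
  | zero => simpa using fun _ ↦ ReflTransGen.refl
  | add w₁ w₂ _ _ h₁ h₂ =>
    intro x
    rw [← add_assoc]
    exact (h₁ x).trans (h₂ _)
  | smul_mem a w hw =>
    obtain ⟨k, hk : k ≠ j, rfl⟩ := hw
    exact fun x ↦ .single ⟨j, k, a, hk.symm, by simp [hk]⟩

lemma reflTransGen_vecMove_of_eqOn_compl {v v' : ι → W} {j : ι} (h : Set.EqOn v' v {j}ᶜ)
    (hv : v j ∈ Submodule.span K (v '' {j}ᶜ)) (hv' : v' j ∈ Submodule.span K (v '' {j}ᶜ)) :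
    ReflTransGen (vecMove K) v v' := by
  have hupdate : v' = update v j (v j + (v' j - v j)) := by
    rw [add_sub_cancel, eq_update_iff]
    exact ⟨rfl, fun k hk ↦ h hk⟩
  rw [hupdate]
  exact reflTransGen_vecMove_update_add (sub_mem hv' hv)

lemma span_image_update_smul {c : K} (hc : c ≠ 0) (v : ι → W) (i : ι) (s : Set ι) :
    Submodule.span K (update v i (c • v i) '' s) = Submodule.span K (v '' s) := by
  rw [Submodule.span_eq_iSup_of_singleton_spans, Submodule.span_eq_iSup_of_singleton_spans (v '' s),
    iSup_image, iSup_image]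
  refine iSup_congr fun k ↦ iSup_congr fun _ ↦ ?_
  obtain rfl | hk := eq_or_ne k i
  · rw [update_self, Submodule.span_singleton_smul_eq hc.isUnit]
  · rw [update_of_ne hk]

lemma reflTransGen_vecMove_update_smul [Fintype ι] [Module.Finite K W]
    (hcard : finrank K W < Fintype.card ι) (v : ι → W) (i : ι) {c : K} (hc : c ≠ 0) :
    ReflTransGen (vecMove K) v (update v i (c • v i)) := by
  obtain ⟨j, hj⟩ := exists_mem_span_image_compl hcard v
  obtain rfl | hij := eq_or_ne i j
  · exact reflTransGen_vecMove_of_eqOn_compl (by simp +contextual [Set.EqOn]) hj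
      (by simpa using Submodule.smul_mem _ c hj)
  have hi : c • v i ∈ Submodule.span K (v '' {j}ᶜ) :=
    Submodule.smul_mem _ _ (Submodule.subset_span ⟨i, hij, rfl⟩)
  set v₁ := update v j (c • v i)
  have store : ReflTransGen (vecMove K) v v₁ :=
    reflTransGen_vecMove_of_eqOn_compl (by simp +contextual [Set.EqOn, v₁]) hj (by simpa [v₁])
  have rescale : vecMove K v₁ (update v₁ i (c • v i)) := by
    refine ⟨i, j, 1 - c⁻¹, hij, ?_⟩
    have hsum : c • v i = v i + (1 - c⁻¹) • c • v i := by
      rw [smul_smul, sub_mul, inv_mul_cancel₀ hc, sub_smul, one_mul, one_smul, add_sub_cancel]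
    simpa [v₁, hij] using congrArg (update v₁ i) hsum
  have hoff : Set.EqOn (update v i (c • v i)) (update v₁ i (c • v i)) {j}ᶜ := by
    intro k (hk : k ≠ j)
    rw [update_comm hij.symm, update_of_ne hk]
  have hspan : Submodule.span K (update v₁ i (c • v i) '' {j}ᶜ) = Submodule.span K (v '' {j}ᶜ) := by
    rw [← hoff.image_eq, span_image_update_smul hc]
  have restore : ReflTransGen (vecMove K) (update v₁ i (c • v i)) (update v i (c • v i)) :=
    reflTransGen_vecMove_of_eqOn_compl hoff (by rw [hspan]; simpa [v₁, hij.symm])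
      (by rw [hspan]; simpa [hij.symm])
  exact (store.tail rescale).trans restore

open scoped Matrix.Module in
lemma reflTransGen_vecMove_matrix_smul [Fintype ι] [Module.Finite K W]
    (hcard : finrank K W < Fintype.card ι) {M : Matrix ι ι K} (hM : M.det ≠ 0) (v : ι → W) :
    ReflTransGen (vecMove K) v (M • v) := by
  refine Matrix.diagonal_transvection_induction_of_det_ne_zero
    (fun M ↦ ∀ v : ι → W, ReflTransGen (vecMove K) v (M • v)) M hM ?diagonal ?transvection ?mul v
  case diagonal =>
    intro D hD v
    rw [Matrix.det_diagonal, Finset.prod_ne_zero_iff] at hD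
    refine reflTransGen_of_forall_update fun u i _ hu ↦ ?_
    simpa [Matrix.diagonal_apply, hu] using
      reflTransGen_vecMove_update_smul hcard u i (hD i (Finset.mem_univ i))
  case transvection =>
    intro t v
    refine .single ⟨t.i, t.j, t.c, t.hij, ?_⟩
    rw [Matrix.TransvectionStruct.toMatrix, Matrix.transvection, add_smul, one_smul,
      Matrix.Module.single_smul, eq_update_iff]
    exact ⟨by simp, fun k hk ↦ by simp [hk]⟩
  case mul =>
    intro A B _ _ hA hB v
    rw [mul_smul]
    exact (hB v).trans (hA _)

lemma exists_linearEquiv_prod_ker {V : Type*} [AddCommGroup V] [Module K V] {f : V →ₗ[K] W}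
    (hf : Surjective f) : ∃ e : V ≃ₗ[K] W × LinearMap.ker f, ∀ x, (e x).1 = f x := by
  let q := (LinearMap.ker f).subtype.leftInverse
  have hq : ∀ x : LinearMap.ker f, q x = x :=
    LinearMap.leftInverse_apply_of_inj (Submodule.ker_subtype _)
  exact ⟨LinearMap.equivProdOfSurjectiveOfIsCompl f q (LinearMap.range_eq_top.2 hf)
    (LinearMap.range_eq_top.2 fun x ↦ ⟨x, hq x⟩) (LinearMap.isCompl_of_proj hq), fun _ ↦ rfl⟩

lemma exists_linearEquiv_comp_eq {V : Type*} [AddCommGroup V] [Module K V] [Module.Finite K V]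
    {f f' : V →ₗ[K] W} (hf : Surjective f) (hf' : Surjective f') :
    ∃ e : V ≃ₗ[K] V, f ∘ₗ e = f' := by
  obtain ⟨φ, hφ⟩ := exists_linearEquiv_prod_ker hf
  obtain ⟨φ', hφ'⟩ := exists_linearEquiv_prod_ker hf'
  have hker : finrank K (LinearMap.ker f') = finrank K (LinearMap.ker f) := by
    have h := LinearMap.finrank_range_add_finrank_ker f
    have h' := LinearMap.finrank_range_add_finrank_ker f'
    rw [LinearMap.range_eq_top.2 hf] at h
    rw [LinearMap.range_eq_top.2 hf'] at h'
    omega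
  let ψ := (LinearEquiv.refl K W).prodCongr (LinearEquiv.ofFinrankEq _ _ hker)
  refine ⟨φ' ≪≫ₗ ψ ≪≫ₗ φ.symm, LinearMap.ext fun x ↦ ?_⟩
  simp [ψ, ← hφ, ← hφ']

open scoped Matrix.Module in
lemma exists_det_ne_zero_smul_eq [Fintype ι] {v v' : ι → W}
    (hv : Submodule.span K (Set.range v) = ⊤) (hv' : Submodule.span K (Set.range v') = ⊤) :
    ∃ M : Matrix ι ι K, M.det ≠ 0 ∧ M • v = v' := by
  obtain ⟨e, he⟩ := exists_linearEquiv_comp_eq (K := K)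
    (f := Fintype.linearCombination K v) (f' := Fintype.linearCombination K v')
    (by rw [← LinearMap.range_eq_top, Fintype.range_linearCombination, hv])
    (by rw [← LinearMap.range_eq_top, Fintype.range_linearCombination, hv'])
  refine ⟨(LinearMap.toMatrix' (e : (ι → K) →ₗ[K] ι → K)).transpose, ?_, funext fun i ↦ ?_⟩
  · rw [Matrix.det_transpose, LinearMap.det_toMatrix']
    exact e.isUnit_det'.ne_zero
  · simpa [LinearMap.toMatrix'_apply, Fintype.linearCombination_apply] using
      LinearMap.congr_fun he (Pi.single i 1)

theorem reflTransGen_vecMove_of_span_eq_top [Fintype ι] (hcard : finrank K W < Fintype.card ι)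
    {v v' : ι → W} (hv : Submodule.span K (Set.range v) = ⊤)
    (hv' : Submodule.span K (Set.range v') = ⊤) :
    ReflTransGen (vecMove K) v v' := by
  have : Module.Finite K W := ⟨hv ▸ Submodule.fg_span (Set.finite_range v)⟩
  obtain ⟨M, hM, rfl⟩ := exists_det_ne_zero_smul_eq hv hv'
  exact reflTransGen_vecMove_matrix_smul hcard hM v

end VectorTuples

section GroupTuples

lemma pow_val_neg_eq_inv {G : Type*} [Group G] {n : ℕ} [NeZero n] {x : G} (hx : x ^ n = 1)
    (a : ZMod n) : x ^ (-a).val = (x ^ a.val)⁻¹ := by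
  have hdvd : n ∣ (-a).val + a.val := by
    rw [← ZMod.natCast_eq_zero_iff]
    simp
  rw [eq_inv_iff_mul_eq_one, ← pow_add, ← orderOf_dvd_iff_pow_eq_one]
  exact (orderOf_dvd_of_pow_eq_one hx).trans hdvd

variable {p r : ℕ} {G : Type*} [Group G] {g : Fin r → G} {i j : Fin r}

lemma reflTransGen_paMove_conj [NeZero p] (hij : i ≠ j) (hg : g j ^ p = 1) (a : ZMod p) :
    ReflTransGen (paMove p) g (update g i ((g j ^ a.val)⁻¹ * g i * g j ^ a.val)) := by
  have left : paMove p g (update g i ((g j ^ a.val)⁻¹ * g i)) :=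
    ⟨i, j, -a, hij, .inr (by rw [pow_val_neg_eq_inv hg])⟩
  refine .tail (.single left) ⟨i, j, a, hij, .inl ?_⟩
  simp [hij.symm]

lemma paMove_update_mul [Fact (1 < p)] (hij : i ≠ j) : paMove p g (update g i (g i * g j)) :=
  ⟨i, j, 1, hij, .inl (by rw [ZMod.val_one, pow_one])⟩

lemma paMove_update_mul_inv [Fact (1 < p)] (hij : i ≠ j) (hg : g j ^ p = 1) :
    paMove p g (update g i (g i * (g j)⁻¹)) := by
  have : NeZero p := ⟨by have := Fact.out (p := 1 < p); omega⟩
  exact ⟨i, j, -1, hij, .inl (by rw [pow_val_neg_eq_inv hg, ZMod.val_one, pow_one])⟩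

end GroupTuples

namespace heisGroup

variable {p : ℕ} [Fact p.Prime] {W : Type*} [AddCommGroup W] [Module (ZMod p) W] [HeisData p W]

@[simp]
lemma fst_one : (1 : W × ZMod p).1 = 0 := rfl

@[simp]
lemma snd_one : (1 : W × ZMod p).2 = 0 := rfl

@[simp]
lemma fst_mul (x y : W × ZMod p) : (x * y).1 = x.1 + y.1 := rfl

@[simp]
lemma snd_mul (x y : W × ZMod p) :
    (x * y).2 = x.2 + y.2 + (2 : ZMod p)⁻¹ * HeisData.ω x.1 y.1 := rfl

@[simp]
lemma fst_inv (x : W × ZMod p) : x⁻¹.1 = -x.1 := rfl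

@[simp]
lemma snd_inv (x : W × ZMod p) : x⁻¹.2 = -x.2 + (2 : ZMod p)⁻¹ * HeisData.ω x.1 x.1 := rfl

lemma fst_pow (x : W × ZMod p) (n : ℕ) : (x ^ n).1 = (n : ZMod p) • x.1 := by
  induction n with
  | zero => simp
  | succ n ih => simp [pow_succ, ih, add_smul]

lemma fst_pow_val (x : W × ZMod p) (a : ZMod p) : (x ^ a.val).1 = a • x.1 := by
  rw [fst_pow, ZMod.natCast_zmod_val]

lemma snd_pow (x : W × ZMod p) (n : ℕ) :
    (x ^ n).2 =
      (n : ZMod p) * x.2 + (2 : ZMod p)⁻¹ * (n.choose 2 : ZMod p) * HeisData.ω x.1 x.1 := by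
  induction n with
  | zero => simp
  | succ n ih =>
    rw [pow_succ, snd_mul, ih, fst_pow, Nat.choose_succ_succ' n 1, Nat.choose_one_right]
    simp only [map_smul, LinearMap.smul_apply, smul_eq_mul, Nat.cast_add, Nat.cast_one]
    ring

lemma pow_prime_eq_one (x : W × ZMod p) : x ^ p = 1 := by
  have hchoose : (2 : ZMod p)⁻¹ * p.choose 2 = 0 := by
    have hp : p.Prime := Fact.out
    obtain rfl | hp2 := eq_or_ne p 2
    · rw [show (2 : ZMod 2) = 0 from rfl, inv_zero, zero_mul]
    · rw [(ZMod.natCast_eq_zero_iff _ _).2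
        (hp.dvd_choose_self two_ne_zero (hp.two_le.lt_of_ne' hp2)), mul_zero]
  ext
  · simp [fst_pow]
  · simp [snd_pow, hchoose]

variable (p W) in
/-- The commutator form `(ω(v, w) - ω(w, v)) / 2` of the Heisenberg group: the central component of
the commutator of two elements lying over `v` and `w`. It equals `ω` when `ω` is alternating and `p`
is odd. -/
def commForm : W →ₗ[ZMod p] W →ₗ[ZMod p] ZMod p :=
  (2 : ZMod p)⁻¹ • (HeisData.ω - HeisData.ω.flip)

lemma commForm_apply (v w : W) :
    commForm p W v w = (2 : ZMod p)⁻¹ * (HeisData.ω v w - HeisData.ω w v) := rfl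

lemma commForm_self (v : W) : commForm p W v v = 0 := by
  simp [commForm_apply]

lemma commForm_swap (v w : W) : commForm p W w v = -commForm p W v w := by
  simp only [commForm_apply]
  ring

lemma conj_eq (x y : W × ZMod p) : y⁻¹ * x * y = (x.1, x.2 + commForm p W x.1 y.1) := by
  ext
  · simp
  · simp only [snd_mul, snd_inv, fst_mul, fst_inv, commForm_apply, map_add, map_neg,
      LinearMap.add_apply, LinearMap.neg_apply]
    ring

lemma commute_iff_commForm_eq_zero {x y : W × ZMod p} :
    Commute x y ↔ commForm p W x.1 y.1 = 0 := by
  rw [commute_iff_eq, ← inv_mul_eq_iff_eq_mul, ← mul_assoc, conj_eq]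
  simp [Prod.ext_iff]

lemma exists_not_commute_of_nondegenerate [Nontrivial W] (hp : p ≠ 2)
    (halt : (HeisData.ω : W →ₗ[ZMod p] W →ₗ[ZMod p] ZMod p).IsAlt)
    (hnondeg : (HeisData.ω : W →ₗ[ZMod p] W →ₗ[ZMod p] ZMod p).SeparatingLeft) :
    ∃ x y : W × ZMod p, ¬Commute x y := by
  obtain ⟨v, hv⟩ := exists_ne (0 : W)
  obtain ⟨w, hw⟩ := not_forall.1 (mt (hnondeg v) hv)
  have h2 : (2 : ZMod p) ≠ 0 := Ring.two_ne_zero (by rwa [ZMod.ringChar_zmod_n])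
  refine ⟨(v, 0), (w, 0), ?_⟩
  rw [commute_iff_commForm_eq_zero, commForm_apply, ← halt.neg v w, sub_neg_eq_add, ← two_mul,
    inv_mul_cancel_left₀ h2]
  exact hw

variable {r : ℕ}

lemma span_range_fst_eq_top {g : Fin r → W × ZMod p} (hg : g ∈ genSet r (W × ZMod p)) :
    Submodule.span (ZMod p) (Set.range (Prod.fst ∘ g)) = ⊤ := by
  have hclosure : ∀ x ∈ Subgroup.closure (Set.range g),
      x.1 ∈ Submodule.span (ZMod p) (Set.range (Prod.fst ∘ g)) := by
    intro x hx
    induction hx using Subgroup.closure_induction with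
    | mem x hx =>
      obtain ⟨i, rfl⟩ := hx
      exact Submodule.subset_span ⟨i, rfl⟩
    | one => exact zero_mem _
    | mul x y _ _ hx hy => exact add_mem hx hy
    | inv x _ hx => exact neg_mem hx
  have htop : Subgroup.closure (Set.range g) = ⊤ := hg
  exact eq_top_iff.2 fun w _ ↦ hclosure (w, 0) (htop ▸ Subgroup.mem_top _)

lemma exists_reflTransGen_paMove_of_vecMove {g : Fin r → W × ZMod p} {v' : Fin r → W}
    (h : ReflTransGen (vecMove (ZMod p)) (Prod.fst ∘ g) v') :
    ∃ g', ReflTransGen (paMove p) g g' ∧ Prod.fst ∘ g' = v' := by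
  induction h with
  | refl => exact ⟨g, .refl, rfl⟩
  | tail _ hmove ih =>
    obtain ⟨g₁, hg₁, rfl⟩ := ih
    obtain ⟨i, j, a, hij, rfl⟩ := hmove
    refine ⟨_, hg₁.tail ⟨i, j, a, hij, .inl rfl⟩, ?_⟩
    rw [comp_update, fst_mul, fst_pow_val]
    rfl

lemma exists_commForm_ne_zero_of_span {ι : Type*} {v : ι → W}
    (hv : Submodule.span (ZMod p) (Set.range v) = ⊤) (hnc : ∃ x y : W × ZMod p, ¬Commute x y) :
    ∃ j k, commForm p W (v j) (v k) ≠ 0 := by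
  by_contra! h
  have hzero : commForm p W = 0 :=
    LinearMap.ext_on_range hv fun j ↦ LinearMap.ext_on_range hv fun k ↦ h j k
  obtain ⟨x, y, hxy⟩ := hnc
  exact hxy (commute_iff_commForm_eq_zero.2 (by simp [hzero]))

lemma reflTransGen_paMove_update_of_commForm_ne_zero {g : Fin r → W × ZMod p} {i j : Fin r}
    (hij : commForm p W (g i).1 (g j).1 ≠ 0) {x : W × ZMod p} (hx : x.1 = (g i).1) :
    ReflTransGen (paMove p) g (update g i x) := by
  have hne : i ≠ j := by
    rintro rfl
    exact hij (commForm_self _)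
  set a := (x.2 - (g i).2) / commForm p W (g i).1 (g j).1
  have hconj : (g j ^ a.val)⁻¹ * g i * g j ^ a.val = x := by
    rw [conj_eq, fst_pow_val, map_smul, smul_eq_mul, div_mul_cancel₀ _ hij, add_sub_cancel, ← hx]
  simpa only [hconj] using reflTransGen_paMove_conj hne (pow_prime_eq_one (g j)) a

lemma reflTransGen_paMove_update {g : Fin r → W × ZMod p}
    (hg : Submodule.span (ZMod p) (Set.range (Prod.fst ∘ g)) = ⊤)
    (hnc : ∃ x y : W × ZMod p, ¬Commute x y) {i : Fin r} {x : W × ZMod p} (hx : x.1 = (g i).1) :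
    ReflTransGen (paMove p) g (update g i x) := by
  by_cases hrad : ∃ l, commForm p W (g i).1 (g l).1 ≠ 0
  · obtain ⟨l, hl⟩ := hrad
    exact reflTransGen_paMove_update_of_commForm_ne_zero hl hx
  push Not at hrad
  obtain ⟨j, k, hjk⟩ := exists_commForm_ne_zero_of_span hg hnc
  have hij : i ≠ j := by
    rintro rfl
    exact hjk (hrad k)
  have hik : i ≠ k := by
    rintro rfl
    exact hjk (by rw [comp_apply, comp_apply, commForm_swap, hrad, neg_zero])
  have multiply : paMove p g (update g i (g i * g j)) := paMove_update_mul hij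
  have correct : ReflTransGen (paMove p) (update g i (g i * g j)) (update g i (x * g j)) := by
    have hne : commForm p W (g i * g j).1 (g k).1 ≠ 0 := by
      simpa [hrad] using hjk
    simpa using reflTransGen_paMove_update_of_commForm_ne_zero (x := x * g j)
      (g := update g i (g i * g j)) (i := i) (j := k) (by simpa [hik.symm] using hne) (by simp [hx])
  have divide : paMove p (update g i (x * g j)) (update g i x) := by
    simpa [hij.symm] using paMove_update_mul_inv (p := p) (g := update g i (x * g j)) hij
      (pow_prime_eq_one _)
  exact (correct.head multiply).tail divide

lemma reflTransGen_paMove_of_fst_eq {g g' : Fin r → W × ZMod p}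
    (hg : Submodule.span (ZMod p) (Set.range (Prod.fst ∘ g)) = ⊤)
    (hnc : ∃ x y : W × ZMod p, ¬Commute x y) (h : Prod.fst ∘ g = Prod.fst ∘ g') :
    ReflTransGen (paMove p) g g' := by
  refine reflTransGen_of_forall_update fun u i hu _ ↦ ?_
  have hfst : Prod.fst ∘ u = Prod.fst ∘ g := funext fun k ↦ by
    obtain hk | hk := hu k
    · simp [hk]
    · simpa [hk] using (congrFun h k).symm
  exact reflTransGen_paMove_update (hfst ▸ hg) hnc (congrFun (h.symm.trans hfst.symm) i)

end heisGroup

theorem stmt11_general {p : ℕ} [Fact p.Prime] {W : Type*} [AddCommGroup W] [Module (ZMod p) W]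
    [HeisData p W] (hnc : ∃ x y : W × ZMod p, ¬Commute x y) {r : ℕ} (hr : finrank (ZMod p) W < r)
    {g g' : Fin r → W × ZMod p} (hg : g ∈ genSet r (W × ZMod p))
    (hg' : g' ∈ genSet r (W × ZMod p)) :
    ReflTransGen (paMove p) g g' := by
  have hspan := heisGroup.span_range_fst_eq_top hg
  have hspan' := heisGroup.span_range_fst_eq_top hg'
  obtain ⟨g₁, hgg₁, hg₁⟩ := heisGroup.exists_reflTransGen_paMove_of_vecMove
    (reflTransGen_vecMove_of_span_eq_top (by rwa [Fintype.card_fin]) hspan hspan')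
  exact hgg₁.trans (heisGroup.reflTransGen_paMove_of_fst_eq (hg₁ ▸ hspan') hnc hg₁)

theorem stmt11 :
    ∀ (p : ℕ) [Fact (Nat.Prime p)], p ≠ 2 →
    ∀ (W : Type) [AddCommGroup W] [Module (ZMod p) W] [HeisData p W] (m : ℕ),
      1 ≤ m → Module.finrank (ZMod p) W = 2 * m →
      -- ω is alternating and nondegenerate
      (∀ v : W, HeisData.ω (p := p) v v = 0) →
      (∀ v : W, (∀ w : W, HeisData.ω (p := p) v w = 0) → v = 0) →
      ∀ r : ℕ, 2 * m + 1 ≤ r →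
        ∀ g g' : Fin r → W × ZMod p, g ∈ genSet r (W × ZMod p) →
          g' ∈ genSet r (W × ZMod p) →
          Relation.ReflTransGen (paMove p) g g' := by
  intro p _ hp W _ _ _ m hm hdim halt hnondeg r hr g g' hg hg'
  have : Nontrivial W := nontrivial_of_finrank_pos (R := ZMod p) (by omega)
  exact stmt11_general (heisGroup.exists_not_commute_of_nondegenerate hp halt hnondeg) (by omega)
    hg hg'
end
end

section
/- Fix an odd prime p and α ∈ (0, (p−1)/p). There is a constant C_{p,α} < ∞ such that, for all sufficiently large r, the birth–death chain (S_t) on {1,…,r} with rates B_s, D_s satisfies sup_{1≤s≤r} E_s[τ_α] ≤ C_{p,α}·r·log r, where τ_α = inf{t : S_t ≥ α·r}. Consequently, there exists B_{p,α} < ∞ with sup_{1≤s≤r} P_s(τ_α > B_{p,α}·r·log r) ≤ 1/2. -/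
open Finset

noncomputable section

/-- Birth probability from state `s` (real-valued). -/
def bdB (p r : ℕ) (s : ℝ) : ℝ := (((p : ℝ) - 1) / p) * (s * ((r : ℝ) - s)) / ((r : ℝ) * ((r : ℝ) - 1))

/-- Death probability from state `s` (real-valued). -/
def bdD (p r : ℕ) (s : ℝ) : ℝ := (1 / (p : ℝ)) * (s * (s - 1)) / ((r : ℝ) * ((r : ℝ) - 1))

/-- The birth–death chain on `{1,…,r}` (state `i : Fin r` has value `i+1`). -/
def bdM (p r : ℕ) : Matrix (Fin r) (Fin r) ℝ := fun i j =>
  if (j : ℕ) = (i : ℕ) + 1 then bdB p r ((i : ℕ) + 1)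
  else if ((j : ℕ) + 1) = (i : ℕ) then bdD p r ((i : ℕ) + 1)
  else if j = i then 1 - bdB p r ((i : ℕ) + 1) - bdD p r ((i : ℕ) + 1)
  else 0

/-- The chain killed on entering `{s : s ≥ α r}`. -/
def bdKillUp (p r : ℕ) (α : ℝ) : Matrix (Fin r) (Fin r) ℝ := fun i j =>
  if (((i : ℕ) + 1 : ℝ) < α * r) ∧ (((j : ℕ) + 1 : ℝ) < α * r) then bdM p r i j else 0

/-- Expected hitting time `E_s[τ_α]` of `{s : s ≥ α r}`, via `Σ_t P_s(τ_α > t)`. -/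
def bdEHit (p r : ℕ) (α : ℝ) (i : Fin r) : ℝ :=
  if ((i : ℕ) + 1 : ℝ) < α * r then ∑' t : ℕ, ∑ j, ((bdKillUp p r α) ^ t) i j else 0

/-- `P_s(τ_α > T)`: the probability of staying below `α r` for `T` steps. -/
def bdSurv (p r : ℕ) (α : ℝ) (i : Fin r) (T : ℕ) : ℝ :=
  if ((i : ℕ) + 1 : ℝ) < α * r then ∑ j, ((bdKillUp p r α) ^ T) i j else 0

/-!
Write `s = i + 1` for the state coded by `i`, `H` for the harmonic numbers and
`c = (p - 1) / p - α`. One step of the chain increases `H_{s-1}` in expectation by at least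
`((p - 1) / p * r - s) / (r (r - 1))`: the birth rate times `1 / s` and the death rate times
`1 / (s - 1)` are affine in `s`. Below `α r` this drift is at least `c / r`, so
`(r / c) (H_r - H_{s-1})` loses at least `1` per step until `τ_α`, and hence bounds `E_s[τ_α]`.
The harmonic numbers grow like `log r`, and Markov's inequality turns the bound on the expectation
into the bound on the tail.
-/

open Matrix

section NonnegMatrix

variable {n R : Type*} [Fintype n] [Semiring R] [PartialOrder R] [IsOrderedRing R]
  {K : Matrix n n R} {f v w : n → R}

lemma mulVec_le_mulVec_of_nonneg (hK : ∀ i j, 0 ≤ K i j) (hvw : v ≤ w) : K *ᵥ v ≤ K *ᵥ w :=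
  fun i => dotProduct_le_dotProduct_of_nonneg_left hvw (hK i)

variable [DecidableEq n]

lemma pow_mulVec_nonneg_s13 (hK : ∀ i j, 0 ≤ K i j) (hf : 0 ≤ f) (t : ℕ) : 0 ≤ K ^ t *ᵥ f := by
  induction t with
  | zero => simpa using hf
  | succ t ih =>
    rw [pow_succ', ← mulVec_mulVec]
    exact fun i => dotProduct_nonneg_of_nonneg (hK i) ih

lemma antitone_pow_mulVec (hK : ∀ i j, 0 ≤ K i j) (hf : K *ᵥ f ≤ f) :
    Antitone fun t : ℕ => K ^ t *ᵥ f := by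
  refine antitone_nat_of_succ_le fun t => ?_
  induction t with
  | zero => simpa using hf
  | succ t ih =>
    simpa only [pow_succ', mulVec_mulVec] using mulVec_le_mulVec_of_nonneg hK ih

lemma sum_range_pow_mulVec_le (hK : ∀ i j, 0 ≤ K i j) (hv : 0 ≤ v) (hdrift : K *ᵥ v + f ≤ v)
    (T : ℕ) : ∑ t ∈ range T, K ^ t *ᵥ f ≤ v := by
  induction T with
  | zero => simpa using hv
  | succ T ih =>
    calc ∑ t ∈ range (T + 1), K ^ t *ᵥ f
        = K *ᵥ (∑ t ∈ range T, K ^ t *ᵥ f) + f := by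
          simp only [sum_range_succ', pow_succ', ← mulVec_mulVec, mulVec_sum, pow_zero,
            one_mulVec]
      _ ≤ K *ᵥ v + f := add_le_add_left (mulVec_le_mulVec_of_nonneg hK ih) f
      _ ≤ v := hdrift

end NonnegMatrix

lemma nsmul_le_sum_range_of_antitone {M : Type*} [AddCommMonoid M] [PartialOrder M]
    [IsOrderedAddMonoid M] {f : ℕ → M} (hf : Antitone f) (T : ℕ) :
    T • f T ≤ ∑ t ∈ range T, f t := by
  simpa using card_nsmul_le_sum (range T) f (f T) fun t ht => hf (mem_range.1 ht).le

lemma harmonic_mono : Monotone harmonic :=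
  monotone_nat_of_le_succ fun n => by
    rw [harmonic_succ]
    exact le_add_of_nonneg_right (by positivity)

lemma inv_le_harmonic_sub_harmonic {m n : ℕ} (h : m < n) :
    (n : ℝ)⁻¹ ≤ harmonic n - harmonic m := by
  obtain ⟨k, rfl⟩ := Nat.exists_eq_succ_of_ne_zero (Nat.ne_zero_of_lt h)
  have hmk : (harmonic m : ℝ) ≤ harmonic k := mod_cast harmonic_mono (Nat.le_of_lt_succ h)
  rw [Nat.succ_eq_add_one, harmonic_succ]
  push_cast
  linarith

lemma one_le_log_natCast {r : ℕ} (hr : 3 ≤ r) : 1 ≤ Real.log r := by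
  have hr' : (3 : ℝ) ≤ r := mod_cast hr
  rw [Real.le_log_iff_exp_le (by linarith)]
  linarith [Real.exp_one_lt_d9]

section Chain

variable {p r : ℕ}

lemma natCast_mul_natCast_sub_one_nonneg (r : ℕ) : 0 ≤ (r : ℝ) * (r - 1) := by
  cases r with
  | zero => simp
  | succ k =>
    rw [Nat.cast_succ, add_sub_cancel_right]
    positivity

lemma bdB_nonneg (hp : 0 < p) {s : ℝ} (hs₁ : 1 ≤ s) (hsr : s ≤ r) : 0 ≤ bdB p r s := by
  have hp' : (1 : ℝ) ≤ p := mod_cast hp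
  exact div_nonneg (mul_nonneg (div_nonneg (by linarith) (by linarith))
    (mul_nonneg (by linarith) (by linarith))) (natCast_mul_natCast_sub_one_nonneg r)

lemma bdD_nonneg {s : ℝ} (hs₁ : 1 ≤ s) : 0 ≤ bdD p r s :=
  div_nonneg (mul_nonneg (by positivity) (mul_nonneg (by linarith) (by linarith)))
    (natCast_mul_natCast_sub_one_nonneg r)

lemma bdB_add_bdD_le_one (hp : 0 < p) {s : ℝ} (hs₁ : 1 ≤ s) (hsr : s ≤ r) :
    bdB p r s + bdD p r s ≤ 1 := by
  have hp₀ : (p : ℝ) ≠ 0 := Nat.cast_ne_zero.2 hp.ne'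
  have hq : 0 ≤ 1 - (1 : ℝ) / p := by
    rw [sub_nonneg, div_le_one (by positivity)]
    exact mod_cast hp
  have hbirth : s * (r - s) ≤ (r : ℝ) * (r - 1) := by gcongr
  have hdeath : s * (s - 1) ≤ (r : ℝ) * (r - 1) := by gcongr
  rw [bdB, bdD, ← add_div, ← one_sub_div hp₀]
  refine div_le_one_of_le₀ ?_ (natCast_mul_natCast_sub_one_nonneg r)
  linear_combination (1 - (1 : ℝ) / p) * hbirth + (1 : ℝ) / p * hdeath

@[simp] lemma bdB_natCast_self : bdB p r r = 0 := by simp [bdB]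

@[simp] lemma bdD_one : bdD p r 1 = 0 := by simp [bdD]

lemma bdM_nonneg (hp : 0 < p) (i j : Fin r) : 0 ≤ bdM p r i j := by
  have hs₁ : (1 : ℝ) ≤ (i : ℕ) + 1 := by simp
  have hsr : ((i : ℕ) + 1 : ℝ) ≤ r := mod_cast i.2
  unfold bdM
  split_ifs
  · exact bdB_nonneg hp hs₁ hsr
  · exact bdD_nonneg hs₁
  · linarith [bdB_add_bdD_le_one hp hs₁ hsr]
  · exact le_rfl

lemma sum_fin_ite_val_eq {M : Type*} [AddCommMonoid M] (a : ℕ) (x : M) :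
    ∑ j : Fin r, (if (j : ℕ) = a then x else 0) = if a < r then x else 0 := by
  rw [Fin.sum_univ_eq_sum_range (fun j => if j = a then x else 0), sum_ite_eq']
  simp only [mem_range]

lemma bdM_mul_eq_sum_ite (f : ℕ → ℝ) (i j : Fin r) :
    bdM p r i j * f j =
      (if (j : ℕ) = i then (1 - bdB p r ((i : ℕ) + 1) - bdD p r ((i : ℕ) + 1)) * f i else 0)
        + (if (j : ℕ) = i + 1 then bdB p r ((i : ℕ) + 1) * f (i + 1) else 0)
        + (if (j : ℕ) = i - 1 then bdD p r ((i : ℕ) + 1) * f (i - 1) else 0) := by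
  have hD : (i : ℕ) = 0 → bdD p r ((i : ℕ) + 1) = 0 := fun h => by simp [h]
  unfold bdM
  grind

-- The out-of-range values `f r` and `f (0 - 1)` come with the coefficients `B_r = D_1 = 0`.
lemma bdM_mulVec_apply (f : ℕ → ℝ) (i : Fin r) :
    (bdM p r *ᵥ fun j => f j) i =
      f i + bdB p r ((i : ℕ) + 1) * (f (i + 1) - f i)
        + bdD p r ((i : ℕ) + 1) * (f (i - 1) - f i) := by
  have hB : ¬ (i : ℕ) + 1 < r → bdB p r ((i : ℕ) + 1) = 0 := fun h => by
    have hr : ((i : ℕ) + 1 : ℝ) = r := mod_cast le_antisymm i.2 (not_lt.1 h)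
    rw [hr, bdB_natCast_self]
  simp only [mulVec, dotProduct, bdM_mul_eq_sum_ite, sum_add_distrib, sum_fin_ite_val_eq,
    i.2, (Nat.sub_le _ _).trans_lt i.2, if_true]
  split_ifs with h
  · ring
  · rw [hB h]
    ring

lemma bdM_mem_rowStochastic (hp : 0 < p) : bdM p r ∈ rowStochastic ℝ (Fin r) :=
  mem_rowStochastic.2 ⟨bdM_nonneg hp, funext fun i =>
    (bdM_mulVec_apply (fun _ => 1) i).trans (by simp)⟩

lemma bdB_mul_inv (p r : ℕ) {s : ℝ} (hs : s ≠ 0) :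
    bdB p r s * s⁻¹ = ((p : ℝ) - 1) / p * (r - s) / (r * (r - 1)) := by
  rw [bdB, div_mul_eq_mul_div]
  congr 1
  field_simp

lemma bdD_mul_inv (p r : ℕ) {s : ℝ} (hs : s - 1 ≠ 0) :
    bdD p r s * (s - 1)⁻¹ = 1 / p * s / (r * (r - 1)) := by
  rw [bdD, div_mul_eq_mul_div]
  congr 1
  field_simp

lemma harmonic_add_drift_le_bdM_mulVec (hp : 0 < p) (i : Fin r) :
    (harmonic i : ℝ) + (((p : ℝ) - 1) / p * r - ((i : ℕ) + 1)) / (r * (r - 1)) ≤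
      (bdM p r *ᵥ fun j => (harmonic j : ℝ)) i := by
  set R : ℝ := r * (r - 1)
  have hp₀ : (p : ℝ) ≠ 0 := Nat.cast_ne_zero.2 hp.ne'
  have hq : (0 : ℝ) ≤ 1 / p := by positivity
  have hbirth : bdB p r ((i : ℕ) + 1) * ((harmonic (i + 1) : ℝ) - harmonic i) =
      (1 - 1 / p) * (r - ((i : ℕ) + 1)) / R := by
    rw [one_sub_div hp₀, ← bdB_mul_inv p r (by positivity), harmonic_succ]
    push_cast
    ring
  have hdeath : -(1 / p * ((i : ℕ) + 1) / R) ≤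
      bdD p r ((i : ℕ) + 1) * ((harmonic (i - 1) : ℝ) - harmonic i) := by
    rcases (i : ℕ) with _ | k
    · have hqR : 0 ≤ 1 / (p : ℝ) / R := div_nonneg hq (natCast_mul_natCast_sub_one_nonneg r)
      simpa using hqR
    · have hk : ((k + 1 : ℕ) : ℝ) + 1 - 1 ≠ 0 := by
        rw [add_sub_cancel_right]
        positivity
      rw [← bdD_mul_inv p r hk, Nat.add_sub_cancel, harmonic_succ]
      push_cast
      simp
  rw [bdM_mulVec_apply (fun j => (harmonic j : ℝ)), hbirth, ← one_sub_div hp₀]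
  have hsplit : ((1 - 1 / (p : ℝ)) * r - ((i : ℕ) + 1)) / R =
      (1 - 1 / p) * (r - ((i : ℕ) + 1)) / R - 1 / p * ((i : ℕ) + 1) / R := by ring
  linarith

/-- The Lyapunov function `s ↦ (r / c) (H_r - H_{s-1})` at the state `s = i + 1`, whose drift
below `((p - 1) / p - c) r` is at most `-1`. -/
def harmonicPotential (r : ℕ) (c : ℝ) (i : ℕ) : ℝ := r / c * (harmonic r - harmonic i)

variable {α c : ℝ}

lemma inv_le_harmonicPotential (hc : 0 < c) (i : Fin r) :
    c⁻¹ ≤ harmonicPotential r c i := by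
  have hr : 0 < (r : ℝ) := mod_cast i.pos
  calc c⁻¹ = r / c * (r : ℝ)⁻¹ := by field_simp
    _ ≤ harmonicPotential r c i :=
      mul_le_mul_of_nonneg_left (inv_le_harmonic_sub_harmonic i.2) (by positivity)

lemma harmonicPotential_nonneg (hc : 0 < c) (i : Fin r) : 0 ≤ harmonicPotential r c i :=
  (inv_nonneg.2 hc.le).trans (inv_le_harmonicPotential hc i)

lemma harmonicPotential_le (hc : 0 < c) (r i : ℕ) :
    harmonicPotential r c i ≤ r / c * (1 + Real.log r) := by
  have hi : (0 : ℝ) ≤ harmonic i := mod_cast harmonic_mono i.zero_le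
  refine mul_le_mul_of_nonneg_left ?_ (by positivity)
  linarith [harmonic_le_one_add_log r]

lemma harmonicPotential_le_mul_log (hc : 0 < c) (hr : 3 ≤ r) (i : ℕ) :
    harmonicPotential r c i ≤ 2 / c * r * Real.log r :=
  calc harmonicPotential r c i ≤ r / c * (1 + Real.log r) := harmonicPotential_le hc r i
    _ ≤ r / c * (2 * Real.log r) := by gcongr; linarith [one_le_log_natCast hr]
    _ = 2 / c * r * Real.log r := by ring

lemma bdM_mulVec_harmonicPotential_apply (c : ℝ) (i : Fin r) :
    (bdM p r *ᵥ fun j => harmonicPotential r c j) i = harmonicPotential r c i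
      - r / c * ((bdM p r *ᵥ fun j => (harmonic j : ℝ)) i - harmonic i) := by
  rw [bdM_mulVec_apply (harmonicPotential r c), bdM_mulVec_apply (fun j => (harmonic j : ℝ))]
  simp only [harmonicPotential]
  ring

lemma bdM_mulVec_harmonicPotential_add_one_le (hp : 0 < p) (hc : 0 < c)
    (hα : α + c ≤ ((p : ℝ) - 1) / p) {i : Fin r} (hi : ((i : ℕ) + 1 : ℝ) < α * r) :
    (bdM p r *ᵥ fun j => harmonicPotential r c j) i + 1 ≤ harmonicPotential r c i := by
  have hr : 0 < (r : ℝ) := mod_cast i.pos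
  have hnum : c * r ≤ ((p : ℝ) - 1) / p * r - ((i : ℕ) + 1) := by nlinarith
  have hr₁ : 0 < (r : ℝ) - 1 := by
    have hp₁ : ((p : ℝ) - 1) / p ≤ 1 := div_le_one_of_le₀ (by linarith) p.cast_nonneg
    nlinarith [mul_pos hc hr, (i : ℕ).cast_nonneg (α := ℝ)]
  have hdrift : c / r ≤ (((p : ℝ) - 1) / p * r - ((i : ℕ) + 1)) / (r * (r - 1)) := by
    rw [div_le_div_iff₀ hr (by positivity)]
    nlinarith [mul_pos hc hr]
  have hharmonic : c / r ≤ (bdM p r *ᵥ fun j => (harmonic j : ℝ)) i - harmonic i := by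
    linarith [harmonic_add_drift_le_bdM_mulVec hp i]
  have hscaled : 1 ≤ r / c * ((bdM p r *ᵥ fun j => (harmonic j : ℝ)) i - harmonic i) :=
    calc 1 = r / c * (c / r) := by field_simp
      _ ≤ _ := by gcongr
  linarith [bdM_mulVec_harmonicPotential_apply (p := p) c i]

lemma bdKillUp_nonneg (hp : 0 < p) (α : ℝ) (i j : Fin r) : 0 ≤ bdKillUp p r α i j := by
  unfold bdKillUp
  split_ifs
  exacts [bdM_nonneg hp i j, le_rfl]

lemma bdKillUp_le_bdM (hp : 0 < p) (α : ℝ) (i j : Fin r) : bdKillUp p r α i j ≤ bdM p r i j := by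
  unfold bdKillUp
  split_ifs
  exacts [le_rfl, bdM_nonneg hp i j]

lemma bdKillUp_mulVec_le_bdM_mulVec (hp : 0 < p) (α : ℝ) {v : Fin r → ℝ} (hv : 0 ≤ v) :
    bdKillUp p r α *ᵥ v ≤ bdM p r *ᵥ v :=
  fun i => dotProduct_le_dotProduct_of_nonneg_right (bdKillUp_le_bdM hp α i) hv

lemma bdKillUp_mulVec_one_le_one (hp : 0 < p) (α : ℝ) : bdKillUp p r α *ᵥ 1 ≤ 1 :=
  (bdKillUp_mulVec_le_bdM_mulVec hp α zero_le_one).trans_eq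
    (one_vecMul_of_mem_rowStochastic (bdM_mem_rowStochastic hp))

lemma bdKillUp_mulVec_apply_of_le (v : Fin r → ℝ) {i : Fin r} (hi : α * r ≤ (i : ℕ) + 1) :
    (bdKillUp p r α *ᵥ v) i = 0 := by
  simp [mulVec, dotProduct, bdKillUp, hi.not_gt]

-- The potential is at least `1 / c ≥ 1` everywhere, so the inequality persists in killed states.
lemma bdKillUp_mulVec_harmonicPotential_add_one_le (hp : 0 < p) (hc : 0 < c) (hc₁ : c ≤ 1)
    (hα : α + c ≤ ((p : ℝ) - 1) / p) :
    (bdKillUp p r α *ᵥ fun j => harmonicPotential r c j) + 1 ≤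
      fun j : Fin r => harmonicPotential r c j := by
  intro i
  rcases lt_or_ge ((i : ℕ) + 1 : ℝ) (α * r) with hi | hi
  · have hkill := bdKillUp_mulVec_le_bdM_mulVec hp α (harmonicPotential_nonneg (r := r) hc) i
    have hdrift := bdM_mulVec_harmonicPotential_add_one_le hp hc hα hi
    simp only [Pi.add_apply, Pi.one_apply]
    linarith
  · rw [Pi.add_apply, bdKillUp_mulVec_apply_of_le _ hi, Pi.one_apply, zero_add]
    exact (one_le_inv₀ hc |>.2 hc₁).trans (inv_le_harmonicPotential hc i)

lemma bdSurv_eq_ite (p : ℕ) (α : ℝ) (i : Fin r) (T : ℕ) :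
    bdSurv p r α i T =
      if ((i : ℕ) + 1 : ℝ) < α * r then (bdKillUp p r α ^ T *ᵥ 1) i else 0 := by
  simp only [bdSurv, mulVec, dotProduct_one]

lemma bdEHit_eq_tsum_bdSurv (p : ℕ) (α : ℝ) (i : Fin r) :
    bdEHit p r α i = ∑' T, bdSurv p r α i T := by
  unfold bdEHit bdSurv
  split_ifs
  exacts [rfl, tsum_zero.symm]

lemma bdSurv_nonneg (hp : 0 < p) (α : ℝ) (i : Fin r) (T : ℕ) : 0 ≤ bdSurv p r α i T := by
  rw [bdSurv_eq_ite]
  split_ifs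
  exacts [pow_mulVec_nonneg_s13 (bdKillUp_nonneg hp α) zero_le_one T i, le_rfl]

lemma antitone_bdSurv (hp : 0 < p) (α : ℝ) (i : Fin r) : Antitone (bdSurv p r α i) := by
  intro S T hST
  simp only [bdSurv_eq_ite]
  split_ifs
  exacts [antitone_pow_mulVec (bdKillUp_nonneg hp α) (bdKillUp_mulVec_one_le_one hp α) hST i,
    le_rfl]

lemma sum_range_bdSurv_le (hp : 0 < p) (hc : 0 < c) (hc₁ : c ≤ 1)
    (hα : α + c ≤ ((p : ℝ) - 1) / p) (i : Fin r) (T : ℕ) :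
    ∑ t ∈ range T, bdSurv p r α i t ≤ harmonicPotential r c i := by
  simp only [bdSurv_eq_ite]
  split_ifs
  · simpa only [Finset.sum_apply] using
      sum_range_pow_mulVec_le (bdKillUp_nonneg hp α) (harmonicPotential_nonneg hc)
        (bdKillUp_mulVec_harmonicPotential_add_one_le hp hc hc₁ hα) T i
  · simpa using harmonicPotential_nonneg hc i

lemma bdEHit_le_harmonicPotential (hp : 0 < p) (hc : 0 < c) (hc₁ : c ≤ 1)
    (hα : α + c ≤ ((p : ℝ) - 1) / p) (i : Fin r) :
    bdEHit p r α i ≤ harmonicPotential r c i := by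
  rw [bdEHit_eq_tsum_bdSurv]
  exact Real.tsum_le_of_sum_range_le (bdSurv_nonneg hp α i) (sum_range_bdSurv_le hp hc hc₁ hα i)

lemma mul_bdSurv_le_harmonicPotential (hp : 0 < p) (hc : 0 < c) (hc₁ : c ≤ 1)
    (hα : α + c ≤ ((p : ℝ) - 1) / p) (i : Fin r) (T : ℕ) :
    T * bdSurv p r α i T ≤ harmonicPotential r c i := by
  rw [← nsmul_eq_mul]
  exact (nsmul_le_sum_range_of_antitone (antitone_bdSurv hp α i) T).trans
    (sum_range_bdSurv_le hp hc hc₁ hα i T)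

end Chain

theorem stmt13_general (p : ℕ) {α : ℝ} (hα₀ : 0 < α) (hα₁ : α < ((p : ℝ) - 1) / p) :
    ∃ C : ℝ, 0 < C ∧ ∃ B : ℝ, 0 < B ∧ ∃ r₀ : ℕ, ∀ r : ℕ, r₀ ≤ r →
      (∀ i : Fin r, bdEHit p r α i ≤ C * r * Real.log r) ∧
      (∀ i : Fin r, ∀ T : ℕ, B * r * Real.log r ≤ T → bdSurv p r α i T ≤ 1 / 2) := by
  have hp : 0 < p := Nat.pos_of_ne_zero fun h => by
    rw [h, Nat.cast_zero, div_zero] at hα₁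
    exact hα₁.not_gt hα₀
  obtain ⟨c, hc⟩ : ∃ c, α + c = ((p : ℝ) - 1) / p := ⟨_, add_sub_cancel _ _⟩
  have hc₀ : 0 < c := by linarith
  have hc₁ : c ≤ 1 := by
    have hp₁ : ((p : ℝ) - 1) / p ≤ 1 := div_le_one_of_le₀ (by linarith) p.cast_nonneg
    linarith
  refine ⟨2 / c, by positivity, 4 / c, by positivity, 3, fun r hr => ?_⟩
  have hV (i : Fin r) := harmonicPotential_le_mul_log hc₀ hr i
  refine ⟨fun i => (bdEHit_le_harmonicPotential hp hc₀ hc₁ hc.le i).trans (hV i),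
    fun i T hT => ?_⟩
  have hlog : 0 < Real.log r := zero_lt_one.trans_le (one_le_log_natCast hr)
  have hT₀ : 0 < (T : ℝ) := lt_of_lt_of_le (by have := i.pos; positivity) hT
  have hmarkov := (mul_bdSurv_le_harmonicPotential hp hc₀ hc₁ hc.le i T).trans (hV i)
  refine le_of_mul_le_mul_left (hmarkov.trans ?_) hT₀
  linear_combination hT / 2

theorem stmt13 :
    ∀ p : ℕ, Nat.Prime p → p ≠ 2 →
    ∀ α : ℝ, 0 < α → α < ((p : ℝ) - 1) / p →
      ∃ C : ℝ, 0 < C ∧ ∃ B : ℝ, 0 < B ∧ ∃ r₀ : ℕ, ∀ r : ℕ, r₀ ≤ r →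
        (∀ i : Fin r, bdEHit p r α i ≤ C * r * Real.log r) ∧
        -- consequently, B·r·log r steps suffice to hit with probability ≥ 1/2
        (∀ i : Fin r, ∀ T : ℕ, B * r * Real.log r ≤ T →
          bdSurv p r α i T ≤ 1 / 2) :=
  fun p _ _ _ hα₀ hα₁ => stmt13_general p hα₀ hα₁
end
end
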